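/- For every long knot f, every ε > 0 and every 2-form η as specified, the configuration space integrals I_X(f) and I_Y(f) converge absolutely. -/

import Mathlib

open MeasureTheory Filter Topology Set

noncomputable section

abbrev E2 : Type := EuclideanSpace ℝ (Fin 2)
abbrev E3 : Type := EuclideanSpace ℝ (Fin 3)
abbrev E4 : Type := EuclideanSpace ℝ (Fin 4)
abbrev E6 : Type := EuclideanSpace ℝ (Fin 6)

/-- The point of `ℝ³` with the given coordinates. -/
def mk3 (x y z : ℝ) : E3 := (WithLp.equiv 2 (Fin 3 → ℝ)).symm ![x, y, z]

/-- The north pole `N = (0,0,1)` of `S² ⊆ ℝ³`. -/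
def NP : E3 := mk3 0 0 1

/-- Projection of `ℝ³` onto the plane `N^⊥` (the first two coordinates). -/
def pr12 (v : E3) : ℝ × ℝ := (v 0, v 1)

/-- The `N`-coordinate. -/
def pr3 (v : E3) : ℝ := v 2

/-- `unitv v = v / ‖v‖`. -/
def unitv (v : E3) : E3 := ‖v‖⁻¹ • v

/-- Determinant of the projections to `N^⊥` of two vectors (first vector, then second). -/
def cross2 (a b : E3) : ℝ := a 0 * b 1 - a 1 * b 0

/-- 3×3 determinant (scalar triple product); for `p ∈ S²` and `v, w` tangent to `S²` at
`p`, this is the value of the standard area form of `S²` at `p` on `(v, w)`. -/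
def det3 (p v w : E3) : ℝ :=
  p 0 * (v 1 * w 2 - v 2 * w 1) - p 1 * (v 0 * w 2 - v 2 * w 0) +
    p 2 * (v 0 * w 1 - v 1 * w 0)

/-! ### Long knots and 3-component long links -/

/-- A long knot: a smooth embedding `ℝ ↪ ℝ³` which is standard outside `[-1,1]`. -/
def IsLongKnot (f : ℝ → E3) : Prop :=
  ContDiff ℝ (⊤ : ℕ∞) f ∧ Function.Injective f ∧ (∀ t, deriv f t ≠ 0) ∧
    ∀ x : ℝ, 1 ≤ |x| → f x = mk3 x 0 0

/-- Smooth isotopy of long knots. -/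
def KnotIsotopic (f₀ f₁ : ℝ → E3) : Prop :=
  ∃ H : ℝ → ℝ → E3,
    ContDiff ℝ (⊤ : ℕ∞) (fun p : ℝ × ℝ => H p.1 p.2) ∧
    (∀ s, IsLongKnot (H s)) ∧ H 0 = f₀ ∧ H 1 = f₁

/-- A 3-component long link: a smooth embedding `ℝ ⊔ ℝ ⊔ ℝ ↪ ℝ³`, standard outside
`[-1,1]`, component `k` (for `k = 1,2,3`, i.e. index `i = k - 1 : Fin 3`) having ends
`x ↦ (x, (2 - k)|x|, 0)`. -/
def IsLongLink3 (f : Fin 3 → ℝ → E3) : Prop :=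
  (∀ i, ContDiff ℝ (⊤ : ℕ∞) (f i)) ∧
  (∀ i j s t, f i s = f j t → i = j ∧ s = t) ∧
  (∀ i t, deriv (f i) t ≠ 0) ∧
  ∀ i (x : ℝ), 1 ≤ |x| → f i x = mk3 x ((1 - ((i : ℕ) : ℝ)) * |x|) 0

/-- Smooth isotopy of 3-component long links. -/
def LinkIsotopic (f₀ f₁ : Fin 3 → ℝ → E3) : Prop :=
  ∃ H : ℝ → Fin 3 → ℝ → E3,
    (∀ i, ContDiff ℝ (⊤ : ℕ∞) (fun p : ℝ × ℝ => H p.1 i p.2)) ∧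
    (∀ s, IsLongLink3 (H s)) ∧ H 0 = f₀ ∧ H 1 = f₁

/-! ### Diagrams, crossings and Gauss diagram pairings -/

/-- All self-intersections of the projection of the long knot `f` are transverse
(any two branches meeting at a multiple point have independent projected tangents). -/
def TransverseK (f : ℝ → E3) : Prop :=
  ∀ t u, t ≠ u → pr12 (f t) = pr12 (f u) → cross2 (deriv f t) (deriv f u) ≠ 0

/-- The diagram of `f` has only transverse double points. -/
def OnlyDoubleK (f : ℝ → E3) : Prop :=
  TransverseK f ∧
  ∀ t u v : ℝ, t ≠ u → u ≠ v → t ≠ v →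
    pr12 (f t) = pr12 (f u) → pr12 (f u) = pr12 (f v) → False

/-- All self-intersections of the projection of the long link `f` are transverse. -/
def TransverseL (f : Fin 3 → ℝ → E3) : Prop :=
  ∀ i j s t, (i, s) ≠ (j, t) → pr12 (f i s) = pr12 (f j t) →
    cross2 (deriv (f i) s) (deriv (f j) t) ≠ 0

/-- The diagram of the long link `f` has only transverse double points. -/
def OnlyDoubleL (f : Fin 3 → ℝ → E3) : Prop :=
  TransverseL f ∧
  ∀ i j k s t u, (i, s) ≠ (j, t) → (j, t) ≠ (k, u) → (i, s) ≠ (k, u) →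
    pr12 (f i s) = pr12 (f j t) → pr12 (f j t) = pr12 (f k u) → False

/-- Crossings of a long knot diagram: pairs `(t, u)` with `t` on the lower and `u` on the
upper strand; the corresponding chord of the Gauss diagram is directed from `t` to `u`. -/
def CrossingK (f : ℝ → E3) : Set (ℝ × ℝ) :=
  {p | p.1 ≠ p.2 ∧ pr12 (f p.1) = pr12 (f p.2) ∧ pr3 (f p.1) < pr3 (f p.2)}

/-- The sign of the crossing `p = (t, u)` (`+1` iff the projected tangent of the
over-strand followed by that of the under-strand is a positive basis of `N^⊥`). -/
def csignK (f : ℝ → E3) (p : ℝ × ℝ) : ℝ :=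
  Real.sign (cross2 (deriv f p.2) (deriv f p.1))

/-- Gauss diagram pairing for a long knot: the sum, over all pairs of chords of the Gauss
diagram of `f` in the relative position prescribed by `R`, of the products of signs. -/
def pairK (f : ℝ → E3) (R : ℝ × ℝ → ℝ × ℝ → Prop) : ℝ :=
  ∑ᶠ q ∈ {q : (ℝ × ℝ) × (ℝ × ℝ) | q.1 ∈ CrossingK f ∧ q.2 ∈ CrossingK f ∧ R q.1 q.2},
    csignK f q.1 * csignK f q.2

/-- `⟨X, G_D⟩` : chords `x₁ → x₃` and `x₄ → x₂` with `x₁ < x₂ < x₃ < x₄`. -/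
def pairXK (f : ℝ → E3) : ℝ :=
  pairK f fun p q => p.1 < q.2 ∧ q.2 < p.2 ∧ p.2 < q.1

/-- `⟨X′₁, G_D⟩` : chords `a → b` and `c → a` with `a < b < c`. -/
def pairX1K (f : ℝ → E3) : ℝ :=
  pairK f fun p q => q.2 = p.1 ∧ p.1 < p.2 ∧ p.2 < q.1

/-- `⟨X′₂, G_D⟩` : chords `a → b` and `c → b` with `a < b < c`. -/
def pairX2K (f : ℝ → E3) : ℝ :=
  pairK f fun p q => q.2 = p.2 ∧ p.1 < p.2 ∧ p.2 < q.1

/-- `⟨X′₃, G_D⟩` : chords `a → c` and `c → b` with `a < b < c`. -/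
def pairX3K (f : ℝ → E3) : ℝ :=
  pairK f fun p q => p.2 = q.1 ∧ p.1 < q.2 ∧ q.2 < p.2

/-- Crossings of a 3-strand diagram between strand `i` (under) and strand `j` (over);
the corresponding chord is directed from `p.1` on strand `i` to `p.2` on strand `j`. -/
def CrossingL (f : Fin 3 → ℝ → E3) (i j : Fin 3) : Set (ℝ × ℝ) :=
  {p | pr12 (f i p.1) = pr12 (f j p.2) ∧ pr3 (f i p.1) < pr3 (f j p.2)}

/-- The sign of the crossing `p` between strand `i` (under) and strand `j` (over). -/
def csignL (f : Fin 3 → ℝ → E3) (i j : Fin 3) (p : ℝ × ℝ) : ℝ :=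
  Real.sign (cross2 (deriv (f j) p.2) (deriv (f i) p.1))

/-- Gauss diagram pairing for a 3-component long link. -/
def pairL (f : Fin 3 → ℝ → E3) (i₁ j₁ i₂ j₂ : Fin 3) (R : ℝ × ℝ → ℝ × ℝ → Prop) : ℝ :=
  ∑ᶠ q ∈ {q : (ℝ × ℝ) × (ℝ × ℝ) |
      q.1 ∈ CrossingL f i₁ j₁ ∧ q.2 ∈ CrossingL f i₂ j₂ ∧ R q.1 q.2},
    csignL f i₁ j₁ q.1 * csignL f i₂ j₂ q.2

/-- `⟨𝒳₁, G_D⟩` : a chord from `t` on strand 1 to strand 2, and a chord from strand 3 to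
`t′` on strand 1, with `t < t′`. -/
def pairL1 (f : Fin 3 → ℝ → E3) : ℝ := pairL f 0 1 2 0 fun p q => p.1 < q.2

/-- `⟨𝒳₂, G_D⟩` : a chord from strand 1 to `u` on strand 2, and a chord from strand 3 to
`u′` on strand 2, with `u < u′`. -/
def pairL2 (f : Fin 3 → ℝ → E3) : ℝ := pairL f 0 1 2 1 fun p q => p.2 < q.2

/-- `⟨𝒳₃, G_D⟩` : a chord from strand 1 to `v` on strand 3, and a chord from `v′` on
strand 3 to strand 2, with `v < v′`. -/
def pairL3 (f : Fin 3 → ℝ → E3) : ℝ := pairL f 0 2 2 1 fun p q => p.2 < q.1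

/-- `⟨𝒳′₁, G_D⟩` : as `𝒳₁` but with `t = t′` (a triple point). -/
def pairL1' (f : Fin 3 → ℝ → E3) : ℝ := pairL f 0 1 2 0 fun p q => p.1 = q.2

/-- `⟨𝒳′₂, G_D⟩` : as `𝒳₂` but with `u = u′` (a triple point). -/
def pairL2' (f : Fin 3 → ℝ → E3) : ℝ := pairL f 0 1 2 1 fun p q => p.2 = q.2

/-- `⟨𝒳′₃, G_D⟩` : as `𝒳₃` but with `v = v′` (a triple point). -/
def pairL3' (f : Fin 3 → ℝ → E3) : ℝ := pairL f 0 2 2 1 fun p q => p.2 = q.1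

/-! ### The localized unit 2-form `η` on `S²` -/

/-- The action of a 2×2 matrix on `ℝ³ = ℝ² × ℝ`, acting on the first two coordinates. -/
def act2 (A : Matrix (Fin 2) (Fin 2) ℝ) (v : E3) : E3 :=
  mk3 (A 0 0 * v 0 + A 0 1 * v 1) (A 1 0 * v 0 + A 1 1 * v 1) (v 2)

/-- `IsEtaForm ε g` says that `η = g · (standard area form of S²)` is a smooth 2-form on
`S²` such that: (i) `supp η` lies in the `ε`-neighbourhood of the north pole `N`;
(ii) `φ*η = det φ · η` for every `φ ∈ O(2) ⊆ O(3)` (since `φ* (area form) = det φ ·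
(area form)`, this amounts to `g ∘ φ = g`); (iii) `∫_{S²} η = 1`, i.e. the integral of
`g` against the surface measure of `S²` is `1`. -/
def IsEtaForm (ε : ℝ) (g : E3 → ℝ) : Prop :=
  ContDiff ℝ (⊤ : ℕ∞) g ∧
  (∀ v : E3, ‖v‖ = 1 → g v ≠ 0 → ‖v - NP‖ < ε) ∧
  (∀ A : Matrix (Fin 2) (Fin 2) ℝ, A * A.transpose = 1 →
    ∀ v : E3, ‖v‖ = 1 → g (act2 A v) = g v) ∧
  ∫ v : Metric.sphere (0 : E3) 1, g v ∂((volume : Measure E3).toSphere) = 1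

/-! ### Configuration space integrals -/

/-- `i`-th partial derivative of a map `ℝⁿ → ℝ³`. -/
def pdv {n : ℕ} (h : EuclideanSpace ℝ (Fin n) → E3) (i : Fin n)
    (x : EuclideanSpace ℝ (Fin n)) : E3 :=
  fderiv ℝ h x (EuclideanSpace.single i 1)

/-- The pullback `h*η` (for `η = g · (area form)`) evaluated at the point `x` on the
coordinate vectors `(e_i, e_j)`. -/
def form2 {n : ℕ} (g : E3 → ℝ) (h : EuclideanSpace ℝ (Fin n) → E3)
    (x : EuclideanSpace ℝ (Fin n)) (i j : Fin n) : ℝ :=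
  g (h x) * det3 (h x) (pdv h i x) (pdv h j x)

/-- `(h*η ∧ k*η)(e₀, e₁, e₂, e₃)` at `x`. -/
def wedge22 (g : E3 → ℝ) (h k : E4 → E3) (x : E4) : ℝ :=
  (1 / 4) * ∑ σ : Equiv.Perm (Fin 4),
    ((Equiv.Perm.sign σ : ℤ) : ℝ) * form2 g h x (σ 0) (σ 1) * form2 g k x (σ 2) (σ 3)

/-- `(h*η ∧ k*η ∧ l*η)(e₀, …, e₅)` at `x`. -/
def wedge222 (g : E3 → ℝ) (h k l : E6 → E3) (x : E6) : ℝ :=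
  (1 / 8) * ∑ σ : Equiv.Perm (Fin 6),
    ((Equiv.Perm.sign σ : ℤ) : ℝ) * form2 g h x (σ 0) (σ 1) * form2 g k x (σ 2) (σ 3) *
      form2 g l x (σ 4) (σ 5)

/-- The configuration space `C_X = {x₁ < x₂ < x₃ < x₄}`. -/
def CX : Set E4 := {x | x 0 < x 1 ∧ x 1 < x 2 ∧ x 2 < x 3}

/-- The integrand `ω_X = h₁₃*η ∧ h₄₂*η` for a long knot. -/
def omegaX (f : ℝ → E3) (g : E3 → ℝ) : E4 → ℝ :=
  wedge22 g (fun x => unitv (f (x 2) - f (x 0))) (fun x => unitv (f (x 1) - f (x 3)))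

/-- The configuration space integral `I_X(f)` of a long knot. -/
def IX (f : ℝ → E3) (g : E3 → ℝ) : ℝ := ∫ x in CX, omegaX f g x

/-- The free point `x₄ ∈ ℝ³` in a `Y`-configuration `(x₁,x₂,x₃;x₄) ∈ ℝ³ × ℝ³ = ℝ⁶`. -/
def ptY (x : E6) : E3 := mk3 (x 3) (x 4) (x 5)

/-- The configuration space `C_Y(f)` for a long knot. -/
def CY (f : ℝ → E3) : Set E6 :=
  {x | x 0 < x 1 ∧ x 1 < x 2 ∧ ptY x ≠ f (x 0) ∧ ptY x ≠ f (x 1) ∧ ptY x ≠ f (x 2)}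

/-- The integrand `ω_Y = h₁₄*η ∧ h₄₂*η ∧ h₃₄*η` for a long knot. -/
def omegaY (f : ℝ → E3) (g : E3 → ℝ) : E6 → ℝ :=
  wedge222 g (fun x => unitv (ptY x - f (x 0))) (fun x => unitv (f (x 1) - ptY x))
    (fun x => unitv (ptY x - f (x 2)))

/-- The configuration space integral `I_Y(f)` of a long knot. -/
def IY (f : ℝ → E3) (g : E3 → ℝ) : ℝ := ∫ x in CY f, omegaY f g x

def CL1 : Set E4 := {x | x 0 < x 1}
def CL2 : Set E4 := {x | x 1 < x 2}
def CL3 : Set E4 := {x | x 2 < x 3}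

/-- The integrand of `I_{𝒳₁}(f)` for a 3-component long link. -/
def omegaL1 (f : Fin 3 → ℝ → E3) (g : E3 → ℝ) : E4 → ℝ :=
  wedge22 g (fun x => unitv (f 1 (x 2) - f 0 (x 0))) (fun x => unitv (f 2 (x 3) - f 0 (x 1)))

/-- The integrand of `I_{𝒳₂}(f)` for a 3-component long link. -/
def omegaL2 (f : Fin 3 → ℝ → E3) (g : E3 → ℝ) : E4 → ℝ :=
  wedge22 g (fun x => unitv (f 1 (x 1) - f 0 (x 0))) (fun x => unitv (f 1 (x 2) - f 2 (x 3)))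

/-- The integrand of `I_{𝒳₃}(f)` for a 3-component long link. -/
def omegaL3 (f : Fin 3 → ℝ → E3) (g : E3 → ℝ) : E4 → ℝ :=
  wedge22 g (fun x => unitv (f 2 (x 2) - f 0 (x 0))) (fun x => unitv (f 1 (x 1) - f 2 (x 3)))

/-- The configuration space integral `I_{𝒳₁}(f)`. -/
def IL1 (f : Fin 3 → ℝ → E3) (g : E3 → ℝ) : ℝ := ∫ x in CL1, omegaL1 f g x

/-- The configuration space integral `I_{𝒳₂}(f)`. -/
def IL2 (f : Fin 3 → ℝ → E3) (g : E3 → ℝ) : ℝ := ∫ x in CL2, omegaL2 f g x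

/-- The configuration space integral `I_{𝒳₃}(f)`. -/
def IL3 (f : Fin 3 → ℝ → E3) (g : E3 → ℝ) : ℝ := ∫ x in CL3, omegaL3 f g x

/-- The configuration space `C_𝒴(f)` for a 3-component long link. -/
def CYL (f : Fin 3 → ℝ → E3) : Set E6 :=
  {x | ptY x ≠ f 0 (x 0) ∧ ptY x ≠ f 1 (x 1) ∧ ptY x ≠ f 2 (x 2)}

/-- The integrand `ω_𝒴 = h₁₄*η ∧ h₄₂*η ∧ h₃₄*η` for a 3-component long link. -/
def omegaYL (f : Fin 3 → ℝ → E3) (g : E3 → ℝ) : E6 → ℝ :=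
  wedge222 g (fun x => unitv (ptY x - f 0 (x 0))) (fun x => unitv (f 1 (x 1) - ptY x))
    (fun x => unitv (ptY x - f 2 (x 2)))

/-- The configuration space integral `I_𝒴(f)`. -/
def ILY (f : Fin 3 → ℝ → E3) (g : E3 → ℝ) : ℝ := ∫ x in CYL f, omegaYL f g x

/-! ### Model triple points -/

/-- The affine parametrization `t ↦ a + t • v` of a straight segment. -/
def seg (a v : E3) (t : ℝ) : E3 := a + t • v

/-- A model triple point: three straight segments `S₁, S₂, S₃` (indexed by `0, 1, 2`),
`S_k` parametrized by `seg (a k) (v k) : (-δ, δ) → ℝ³`, all parallel to the plane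
`N^⊥`, whose projections to `N^⊥` meet pairwise transversely at the single common point
which is the projection of each midpoint `a k`, and with `S₂` higher than `S₁`, `S₃`. -/
def IsModelTriple (a v : Fin 3 → E3) : Prop :=
  (∀ k, v k 2 = 0) ∧ (∀ k, v k ≠ 0) ∧
  pr12 (a 0) = pr12 (a 1) ∧ pr12 (a 1) = pr12 (a 2) ∧
  (∀ j k, j ≠ k → cross2 (v j) (v k) ≠ 0) ∧
  a 0 2 < a 1 2 ∧ a 2 2 < a 1 2

/-- A model triple point of type `(←, s₁, s₂, s₃)`: `S₁` passes over `S₃`, and the signs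
of the crossings `S₁–S₃`, `S₁–S₂`, `S₂–S₃` are `s₁, s₂, s₃` respectively. -/
def ModelLeft (a v : Fin 3 → E3) (s1 s2 s3 : ℝ) : Prop :=
  IsModelTriple a v ∧ a 2 2 < a 0 2 ∧
  s1 = Real.sign (cross2 (v 0) (v 2)) ∧
  s2 = Real.sign (cross2 (v 1) (v 0)) ∧
  s3 = Real.sign (cross2 (v 1) (v 2))

/-- A model triple point of type `(→, s₁, s₂, s₃)`: `S₃` passes over `S₁`, and the signs
of the crossings `S₁–S₃`, `S₁–S₂`, `S₂–S₃` are `s₁, s₂, s₃` respectively. -/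
def ModelRight (a v : Fin 3 → E3) (s1 s2 s3 : ℝ) : Prop :=
  IsModelTriple a v ∧ a 0 2 < a 2 2 ∧
  s1 = Real.sign (cross2 (v 2) (v 0)) ∧
  s2 = Real.sign (cross2 (v 1) (v 0)) ∧
  s3 = Real.sign (cross2 (v 1) (v 2))

/-- The cube `(-δ, δ)⁴ ⊆ ℝ⁴`. -/
def cube4 (δ : ℝ) : Set E4 := {x | ∀ i, |x i| < δ}

/-- The model configuration space integral `I_X^{X′₁}`: the two points `t₁ < t₂` lie on
`S₁`, the point `t₃` on `S₂` and the point `t₄` on `S₃`; the maps are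
`h₁₃ = unit (f₂(t₃) - f₁(t₁))` and `h₄₂ = unit (f₁(t₂) - f₃(t₄))`. -/
def IX1model (a v : Fin 3 → E3) (δ : ℝ) (g : E3 → ℝ) : ℝ :=
  ∫ x in cube4 δ ∩ {x : E4 | x 0 < x 1},
    wedge22 g (fun x => unitv (seg (a 1) (v 1) (x 2) - seg (a 0) (v 0) (x 0)))
      (fun x => unitv (seg (a 0) (v 0) (x 1) - seg (a 2) (v 2) (x 3))) x

/-- The model configuration space integral `I_X^{X′₂}` (`(X′₂, l)` for a model of type
`←`, `(X′₂, r)` for a model of type `→`): the two points `t₂ < t₃` lie on `S₂`, the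
point `t₁` on `S₁` and the point `t₄` on `S₃`; the maps are
`h₁₃ = unit (f₂(t₃) - f₁(t₁))` and `h₄₂ = unit (f₂(t₂) - f₃(t₄))`. -/
def IX2model (a v : Fin 3 → E3) (δ : ℝ) (g : E3 → ℝ) : ℝ :=
  ∫ x in cube4 δ ∩ {x : E4 | x 1 < x 2},
    wedge22 g (fun x => unitv (seg (a 1) (v 1) (x 2) - seg (a 0) (v 0) (x 0)))
      (fun x => unitv (seg (a 1) (v 1) (x 1) - seg (a 2) (v 2) (x 3))) x

/-- The model configuration space integral `I_X^{X′₃}`: the two points `t₃ < t₄` lie on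
`S₃`, the point `t₁` on `S₁` and the point `t₂` on `S₂`; the maps are
`h₁₃ = unit (f₃(t₃) - f₁(t₁))` and `h₄₂ = unit (f₂(t₂) - f₃(t₄))`. -/
def IX3model (a v : Fin 3 → E3) (δ : ℝ) (g : E3 → ℝ) : ℝ :=
  ∫ x in cube4 δ ∩ {x : E4 | x 2 < x 3},
    wedge22 g (fun x => unitv (seg (a 2) (v 2) (x 2) - seg (a 0) (v 0) (x 0)))
      (fun x => unitv (seg (a 1) (v 1) (x 1) - seg (a 2) (v 2) (x 3))) x

/-- The model `Y`-integral `I_Y^{s₁,s₂,s₃}` over `(-δ,δ)³ × ℝ³`: the point `t_k` lies on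
`S_k` and `x₄ ∈ ℝ³` is free; the maps are `h₁₄ = unit (x₄ - f₁(t₁))`,
`h₄₂ = unit (f₂(t₂) - x₄)` and `h₃₄ = unit (x₄ - f₃(t₃))`. -/
def IYmodel (a v : Fin 3 → E3) (δ : ℝ) (g : E3 → ℝ) : ℝ :=
  ∫ x in {x : E6 | |x 0| < δ ∧ |x 1| < δ ∧ |x 2| < δ ∧
      ptY x ≠ seg (a 0) (v 0) (x 0) ∧ ptY x ≠ seg (a 1) (v 1) (x 1) ∧
      ptY x ≠ seg (a 2) (v 2) (x 2)},
    wedge222 g (fun x => unitv (ptY x - seg (a 0) (v 0) (x 0)))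
      (fun x => unitv (seg (a 1) (v 1) (x 1) - ptY x))
      (fun x => unitv (ptY x - seg (a 2) (v 2) (x 2))) x

/-- Near every (triple or higher) multiple point of the diagram, the strands of the long
knot `f` are straight segments parallel to the plane `N^⊥`. -/
def StraightNearMultipleK (f : ℝ → E3) : Prop :=
  ∀ t u v : ℝ, t ≠ u → u ≠ v → t ≠ v →
    pr12 (f t) = pr12 (f u) → pr12 (f u) = pr12 (f v) →
    ∃ δ > (0 : ℝ), ∃ w : E3, w 2 = 0 ∧ ∀ s : ℝ, |s - t| < δ → f s = f t + (s - t) • w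

/-- Near every (triple or higher) multiple point of the diagram, the strands of the long
link `f` are straight segments parallel to the plane `N^⊥`. -/
def StraightNearMultipleL (f : Fin 3 → ℝ → E3) : Prop :=
  ∀ (i j k : Fin 3) (t u v : ℝ), (i, t) ≠ (j, u) → (j, u) ≠ (k, v) → (i, t) ≠ (k, v) →
    pr12 (f i t) = pr12 (f j u) → pr12 (f j u) = pr12 (f k v) →
    ∃ δ > (0 : ℝ), ∃ w : E3, w 2 = 0 ∧ ∀ s : ℝ, |s - t| < δ → f i s = f i t + (s - t) • w

/-! ### Closed 2-component links and the linking number -/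

/-- A smooth loop in `ℝ³`, parametrized with period 1 and injective on a period. -/
def IsLoop (f : ℝ → E3) : Prop :=
  ContDiff ℝ (⊤ : ℕ∞) f ∧ (∀ t, f (t + 1) = f t) ∧ (∀ t, deriv f t ≠ 0) ∧
    ∀ s t : ℝ, f s = f t → ∃ n : ℤ, t - s = n

/-- The diagram of the 2-component link `(f 0, f 1)` has only transverse double points. -/
def OnlyDouble2 (f : Fin 2 → ℝ → E3) : Prop :=
  (∀ i j s t, f i s ≠ f j t → pr12 (f i s) = pr12 (f j t) →
      cross2 (deriv (f i) s) (deriv (f j) t) ≠ 0) ∧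
  ∀ i j k s t u, f i s ≠ f j t → f j t ≠ f k u → f i s ≠ f k u →
    pr12 (f i s) = pr12 (f j t) → pr12 (f j t) = pr12 (f k u) → False

/-- The crossings of the diagram at which `f₂` passes over `f₁` (one parameter period). -/
def Crossing12 (f₁ f₂ : ℝ → E3) : Set (ℝ × ℝ) :=
  {p | p.1 ∈ Ico (0 : ℝ) 1 ∧ p.2 ∈ Ico (0 : ℝ) 1 ∧
    pr12 (f₁ p.1) = pr12 (f₂ p.2) ∧ pr3 (f₁ p.1) < pr3 (f₂ p.2)}

/-- The sum of the signs of the crossings of the diagram at which `f₂` passes over `f₁`;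
this is the linking number `lk(f₁, f₂)`, i.e. the mapping degree of
`h : S¹ × S¹ → S²`. -/
def lkSum (f₁ f₂ : ℝ → E3) : ℝ :=
  ∑ᶠ p ∈ Crossing12 f₁ f₂, Real.sign (cross2 (deriv f₂ p.2) (deriv f₁ p.1))

/-- The fundamental domain `[0,1) × [0,1)` of `S¹ × S¹`. -/
def sq01 : Set E2 := {x | x 0 ∈ Ico (0 : ℝ) 1 ∧ x 1 ∈ Ico (0 : ℝ) 1}

/-- `∫_{S¹×S¹} h*η` for `h(x₁,x₂) = unit (f₂(x₂) - f₁(x₁))`. -/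
def lkIntegral (f₁ f₂ : ℝ → E3) (g : E3 → ℝ) : ℝ :=
  ∫ x in sq01, form2 g (fun x : E2 => unitv (f₂ (x 1) - f₁ (x 0))) x 0 1

/-!
With `h = V / ‖V‖`, the radial part of `dh` drops out of the area form, so both integrands are
explicit determinants in `f`, its velocity and the inverse lengths of the chords involved.

For `X` the coefficient of a single chord from `f s` to `f t` is
`‖f t - f s‖⁻³ det (f t - f s, f' s, f' t)`. By Taylor expansion the determinant is cubic in
`|t - s|`, so the coefficient is bounded near the diagonal; far from it, it is `O(|t - s|⁻²)`. It
vanishes if both ends lie on the standard line, so one of them may be confined to `[-1, 1]`, and it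
is integrable over the plane. The integrand is the product of two such coefficients, in separate
variables.

For `Y` the integrand is the determinant of the moments `(p - f t) × f' t` of the three velocities
about the free vertex `p`, divided by the cubes of the lengths of the legs. Subtracting the moment
of the shortest leg, of length `u`, from the other two replaces them by differences of order
`v² / (1 + v)`, where `v` is the length of the longer leg. The three legs thus contribute at most
`u⁻²` and twice `(v (1 + v))⁻¹`. Since `v` dominates both `u` and the distance `r` along the knot
between the two feet, a part of `(v (1 + v))⁻¹` integrable in `r` can be split off, the remainder
being absorbed by `u`. The determinant vanishes if all three feet lie on the line, so that one of
them may be confined to `[-1, 1]`; integrating first over `p`, then along the knot, gives the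
convergence.
-/

section Wedge

variable {ι κ R : Type*} [Fintype ι] [DecidableEq ι] [Fintype κ] [DecidableEq κ] [CommRing R]

/-- The `σ`-summand of the antisymmetrised product of the bilinear forms `X k`, the form `X k`
being evaluated at the positions `p k`, `q k`. Up to a factor `2 ^ |ι|`, the sum over `σ` is the
value of the wedge product of the 2-forms `X k` on the standard frame. -/
def wedgeTerm (p q : ι → κ) (X : ι → Matrix κ κ R) (σ : Equiv.Perm κ) : R :=
  ((σ.sign : ℤ) : R) * ∏ k, X k (σ (p k)) (σ (q k))

theorem sum_wedgeTerm_fixing_inl (X : ι → Matrix (ι ⊕ ι) (ι ⊕ ι) R) :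
    ∑ σ : Equiv.Perm (ι ⊕ ι) with ∀ k, σ (.inl k) = .inl k, wedgeTerm .inl .inr X σ =
      (Matrix.of fun k l => X k (.inl k) (.inr l)).det := by
  set C : Matrix ι ι R := Matrix.of fun k l => X k (.inl k) (.inr l)
  have hdet : (Matrix.fromBlocks 1 0 (Matrix.of fun k l => X k (.inl k) (.inl l)) C).det =
      C.det := by rw [Matrix.det_fromBlocks_zero₁₂, Matrix.det_one, one_mul]
  rw [← hdet, ← Matrix.det_transpose, Matrix.det_apply', Finset.sum_filter]
  refine Finset.sum_congr rfl fun σ _ => ?_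
  simp only [wedgeTerm, Matrix.transpose_apply, Fintype.prod_sum_type]
  split_ifs with hσ
  · simp only [hσ, Matrix.fromBlocks_apply₁₁, Matrix.one_apply_eq, Finset.prod_const_one, one_mul]
    congr 1
    refine Finset.prod_congr rfl fun k _ => ?_
    rcases σ (.inr k) with l | l <;> rfl
  · obtain ⟨k, hk⟩ := not_forall.mp hσ
    have hzero : Matrix.fromBlocks 1 0 (Matrix.of fun k l => X k (.inl k) (.inl l)) C
        (.inl k) (σ (.inl k)) = 0 := by
      rcases hl : σ (.inl k) with l | l
      · exact Matrix.one_apply_ne fun h => hk (by rw [hl, h])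
      · rfl
    rw [Finset.prod_eq_zero (Finset.mem_univ k) hzero, zero_mul, mul_zero]

theorem wedgeTerm_mul_swap {X : ι → Matrix (ι ⊕ ι) (ι ⊕ ι) R} {j : ι}
    (hX : ∀ a b, X j a b = -X j b a) (σ : Equiv.Perm (ι ⊕ ι)) :
    wedgeTerm .inl .inr X (σ * Equiv.swap (.inl j) (.inr j)) = wedgeTerm .inl .inr X σ := by
  have hprod : ∏ k ∈ Finset.univ.erase j,
        X k ((σ * Equiv.swap (Sum.inl j) (Sum.inr j)) (.inl k))
          ((σ * Equiv.swap (Sum.inl j) (Sum.inr j)) (.inr k)) =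
      ∏ k ∈ Finset.univ.erase j, X k (σ (.inl k)) (σ (.inr k)) := by
    refine Finset.prod_congr rfl fun k hk => ?_
    have hkj : k ≠ j := Finset.ne_of_mem_erase hk
    rw [Equiv.Perm.mul_apply, Equiv.Perm.mul_apply,
      Equiv.swap_apply_of_ne_of_ne (by simpa) (by simp),
      Equiv.swap_apply_of_ne_of_ne (by simp) (by simpa)]
  simp only [wedgeTerm]
  rw [← Finset.mul_prod_erase _ _ (Finset.mem_univ j), hprod,
    ← Finset.mul_prod_erase _ _ (Finset.mem_univ j), Equiv.Perm.mul_apply, Equiv.Perm.mul_apply,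
    Equiv.swap_apply_left, Equiv.swap_apply_right, hX, Equiv.Perm.sign_mul,
    Equiv.Perm.sign_swap (by simp)]
  push_cast
  ring

theorem wedgeTerm_eq_zero {X : ι → Matrix (ι ⊕ ι) (ι ⊕ ι) R} {j : ι}
    (hX : ∀ k a b, X k a b = -X k b a) (h0 : ∀ k b, j ≠ k → X k (.inl j) b = 0)
    {σ : Equiv.Perm (ι ⊕ ι)} (hl : σ (.inl j) ≠ .inl j) (hr : σ (.inr j) ≠ .inl j) :
    wedgeTerm .inl .inr X σ = 0 := by
  suffices ∃ k, X k (σ (.inl k)) (σ (.inr k)) = 0 by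
    obtain ⟨k, hk⟩ := this
    rw [wedgeTerm, Finset.prod_eq_zero (Finset.mem_univ k) hk, mul_zero]
  obtain ⟨k | k, hk⟩ := σ.surjective (.inl j)
  · exact ⟨k, by rw [hk, h0]; rintro rfl; exact hl hk⟩
  · exact ⟨k, by rw [hX, hk, h0, neg_zero]; rintro rfl; exact hr hk⟩

theorem sum_wedgeTerm_filter_ne {X : ι → Matrix (ι ⊕ ι) (ι ⊕ ι) R}
    (hX : ∀ k a b, X k a b = -X k b a) {j : ι} (h0 : ∀ k b, j ≠ k → X k (.inl j) b = 0)
    {T : Finset ι} (hj : j ∉ T) :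
    ∑ σ : Equiv.Perm (ι ⊕ ι) with (∀ k ∈ T, σ (.inl k) = .inl k) ∧ σ (.inl j) ≠ .inl j,
        wedgeTerm .inl .inr X σ =
      ∑ σ : Equiv.Perm (ι ⊕ ι) with (∀ k ∈ T, σ (.inl k) = .inl k) ∧ σ (.inl j) = .inl j,
        wedgeTerm .inl .inr X σ := by
  rw [Finset.sum_filter, Finset.sum_filter,
    ← Equiv.sum_comp (Equiv.mulRight (Equiv.swap (.inl j) (.inr j)))]
  refine Finset.sum_congr rfl fun σ _ => ?_
  have hfix : (∀ k ∈ T, (σ * Equiv.swap (Sum.inl j) (Sum.inr j)) (.inl k) = .inl k) ↔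
      ∀ k ∈ T, σ (.inl k) = .inl k := by
    refine forall₂_congr fun k hk => ?_
    rw [Equiv.Perm.mul_apply, Equiv.swap_apply_of_ne_of_ne _ Sum.inl_ne_inr]
    rintro ⟨⟩
    exact hj hk
  have happly : (σ * Equiv.swap (Sum.inl j) (Sum.inr j)) (.inl j) = σ (.inr j) := by
    rw [Equiv.Perm.mul_apply, Equiv.swap_apply_left]
  simp only [ne_eq, Equiv.coe_mulRight, wedgeTerm_mul_swap (hX j), hfix, happly]
  by_cases hl : σ (.inl j) = .inl j
  · have hr : σ (.inr j) ≠ .inl j := fun hr => Sum.inl_ne_inr (σ.injective (hl.trans hr.symm))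
    simp only [hl, hr, not_false_eq_true, and_true]
  · by_cases hr : σ (.inr j) = .inl j
    · simp only [hl, hr, not_true_eq_false, and_false]
    · simp only [wedgeTerm_eq_zero hX h0 hl hr, ite_self]

theorem sum_wedgeTerm_eq_two_pow_mul {X : ι → Matrix (ι ⊕ ι) (ι ⊕ ι) R}
    (hX : ∀ k a b, X k a b = -X k b a) (h0 : ∀ j k b, j ≠ k → X k (.inl j) b = 0)
    (T : Finset ι) :
    ∑ σ, wedgeTerm .inl .inr X σ =
      2 ^ T.card * ∑ σ : Equiv.Perm (ι ⊕ ι) with ∀ k ∈ T, σ (.inl k) = .inl k,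
        wedgeTerm .inl .inr X σ := by
  induction T using Finset.induction_on with
  | empty => simp
  | insert j T hj ih =>
    rw [ih, Finset.card_insert_of_notMem hj, pow_succ, mul_assoc, two_mul]
    congr 1
    rw [← Finset.sum_filter_add_sum_filter_not _ fun σ : Equiv.Perm (ι ⊕ ι) => σ (.inl j) = .inl j,
      Finset.filter_filter, Finset.filter_filter,
      sum_wedgeTerm_filter_ne hX (h0 j) hj]
    simp only [Finset.forall_mem_insert, and_comm]

theorem sum_wedgeTerm_inl_inr {X : ι → Matrix (ι ⊕ ι) (ι ⊕ ι) R}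
    (hX : ∀ k a b, X k a b = -X k b a) (h0 : ∀ j k b, j ≠ k → X k (.inl j) b = 0) :
    ∑ σ, wedgeTerm .inl .inr X σ =
      2 ^ Fintype.card ι * (Matrix.of fun k l => X k (.inl k) (.inr l)).det := by
  rw [sum_wedgeTerm_eq_two_pow_mul hX h0 Finset.univ, Finset.card_univ, ← sum_wedgeTerm_fixing_inl]
  simp only [Finset.mem_univ, true_imp_iff]

theorem abs_sum_wedgeTerm {X : ι → Matrix κ κ ℝ} {p q a b : ι → κ}
    (hpq : Function.Bijective (Sum.elim p q)) (hab : Function.Bijective (Sum.elim a b))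
    (hX : ∀ k i j, X k i j = -X k j i) (h0 : ∀ j k i, j ≠ k → X k (a j) i = 0) :
    |∑ σ, wedgeTerm p q X σ| =
      2 ^ Fintype.card ι * |(Matrix.of fun k l => X k (a k) (b l)).det| := by
  set e : ι ⊕ ι ≃ κ := Equiv.ofBijective _ hpq
  set d : ι ⊕ ι ≃ κ := Equiv.ofBijective _ hab
  set c : Equiv.Perm κ := e.symm.trans d
  set Y : ι → Matrix (ι ⊕ ι) (ι ⊕ ι) ℝ := fun k => (X k).submatrix d d
  have hterm (τ : Equiv.Perm (ι ⊕ ι)) : wedgeTerm p q X (e.equivCongr d τ) =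
      (c.sign : ℤ) * wedgeTerm .inl .inr Y τ := by
    have hτ : e.equivCongr d τ = c * e.permCongr τ := by ext; simp [c]
    have hp (k : ι) : e.equivCongr d τ (p k) = d (τ (.inl k)) := by
      have : p k = e (.inl k) := rfl
      simp [this]
    have hq (k : ι) : e.equivCongr d τ (q k) = d (τ (.inr k)) := by
      have : q k = e (.inr k) := rfl
      simp [this]
    simp only [wedgeTerm, hp, hq, Y, Matrix.submatrix_apply]
    rw [hτ, Equiv.Perm.sign_mul, Equiv.Perm.sign_permCongr]
    push_cast
    ring
  have hsum := sum_wedgeTerm_inl_inr (X := Y) (fun k i j => hX k _ _) fun j k i hjk => h0 j k _ hjk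
  rw [← Equiv.sum_comp (e.equivCongr d), Finset.sum_congr rfl fun τ _ => hterm τ, ← Finset.mul_sum,
    hsum, abs_mul, abs_mul, abs_pow, abs_two]
  have hsign : |((c.sign : ℤ) : ℝ)| = 1 := by
    rcases Int.units_eq_one_or c.sign with h | h <;> simp [h]
  rw [hsign, one_mul]
  rfl

end Wedge

section Algebra

@[simp] theorem mk3_apply_zero (x y z : ℝ) : mk3 x y z 0 = x := rfl

@[simp] theorem mk3_apply_one (x y z : ℝ) : mk3 x y z 1 = y := rfl

@[simp] theorem mk3_apply_two (x y z : ℝ) : mk3 x y z 2 = z := rfl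

/-- The cross product of `ℝ³`, transported to the Euclidean space `E3`. -/
def cross3 : E3 →ₗ[ℝ] E3 →ₗ[ℝ] E3 :=
  (crossProduct.compl₁₂ (WithLp.linearEquiv 2 ℝ (Fin 3 → ℝ)).toLinearMap
    (WithLp.linearEquiv 2 ℝ (Fin 3 → ℝ)).toLinearMap).compr₂
    (WithLp.linearEquiv 2 ℝ (Fin 3 → ℝ)).symm.toLinearMap

theorem cross3_eq_mk3 (a b : E3) :
    cross3 a b = mk3 (a 1 * b 2 - a 2 * b 1) (a 2 * b 0 - a 0 * b 2) (a 0 * b 1 - a 1 * b 0) :=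
  congrArg (WithLp.equiv 2 (Fin 3 → ℝ)).symm (cross_apply _ _)

theorem cross3_self (a : E3) : cross3 a a = 0 := by
  ext i; fin_cases i <;> simp [cross3_eq_mk3, mul_comm]

theorem norm_cross3_le (a b : E3) : ‖cross3 a b‖ ≤ ‖a‖ * ‖b‖ := by
  have lagrange : ‖cross3 a b‖ ^ 2 + inner ℝ a b ^ 2 = (‖a‖ * ‖b‖) ^ 2 := by
    simp only [mul_pow, EuclideanSpace.real_norm_sq_eq, PiLp.inner_apply, Fin.sum_univ_three,
      cross3_eq_mk3, mk3_apply_zero, mk3_apply_one, mk3_apply_two, RCLike.inner_apply,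
      conj_trivial]
    ring
  exact le_of_sq_le_sq (by nlinarith [sq_nonneg (inner ℝ a b)]) (by positivity)

theorem det3_eq_inner_cross3 (a b c : E3) : det3 a b c = inner ℝ a (cross3 b c) := by
  simp only [det3, cross3_eq_mk3, PiLp.inner_apply, Fin.sum_univ_three, mk3_apply_zero,
    mk3_apply_one, mk3_apply_two, RCLike.inner_apply, conj_trivial]
  ring

theorem det3_rotate (a b c : E3) : det3 a b c = det3 c a b := by simp only [det3]; ring

theorem det3_swap (a b c : E3) : det3 a b c = -det3 a c b := by simp only [det3]; ring

theorem abs_det3_le (a b c : E3) : |det3 a b c| ≤ ‖a‖ * ‖b‖ * ‖c‖ := by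
  rw [det3_eq_inner_cross3, mul_assoc]
  exact (abs_real_inner_le_norm _ _).trans (by gcongr; exact norm_cross3_le b c)

end Algebra

section Pullbacks

variable {n : ℕ}

theorem norm_unitv {v : E3} (hv : v ≠ 0) : ‖unitv v‖ = 1 := by
  rw [unitv, norm_smul, norm_inv, norm_norm, inv_mul_cancel₀ (norm_ne_zero_iff.mpr hv)]

theorem unitv_neg (v : E3) : unitv (-v) = -unitv v := by
  rw [unitv, unitv, norm_neg, smul_neg]

theorem form2_swap (g : E3 → ℝ) (h : EuclideanSpace ℝ (Fin n) → E3) (x : EuclideanSpace ℝ (Fin n))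
    (i j : Fin n) : form2 g h x i j = -form2 g h x j i := by
  rw [form2, form2, det3_swap, mul_neg]

theorem form2_neg (g : E3 → ℝ) (h : EuclideanSpace ℝ (Fin n) → E3) :
    form2 g (fun y => -h y) = form2 (fun v => -g (-v)) h := by
  funext x i j
  simp only [form2, pdv, fderiv_fun_neg, neg_apply, det3, PiLp.neg_apply]
  ring

/-- The radial part of the differential of `V / ‖V‖` is killed by the determinant. -/
theorem form2_unitv (g : E3 → ℝ) {V : EuclideanSpace ℝ (Fin n) → E3}
    {x : EuclideanSpace ℝ (Fin n)} (hV : DifferentiableAt ℝ V x) (h0 : V x ≠ 0) (i j : Fin n) :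
    form2 g (fun y => unitv (V y)) x i j =
      g (unitv (V x)) * ‖V x‖⁻¹ ^ 3 * det3 (V x) (pdv V i x) (pdv V j x) := by
  have hinv : DifferentiableAt ℝ (fun y => ‖V y‖⁻¹) x :=
    (hV.norm ℝ h0).inv (norm_ne_zero_iff.mpr h0)
  have hpdv (k : Fin n) : pdv (fun y => unitv (V y)) k x = ‖V x‖⁻¹ • pdv V k x +
      fderiv ℝ (fun y => ‖V y‖⁻¹) x (EuclideanSpace.single k 1) • V x := by
    have hsmul : HasFDerivAt (fun y => unitv (V y)) _ x := hinv.hasFDerivAt.smul hV.hasFDerivAt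
    simp [pdv, hsmul.fderiv]
  rw [form2, hpdv, hpdv]
  simp only [det3, unitv, PiLp.add_apply, PiLp.smul_apply, smul_eq_mul]
  ring

theorem measurable_form2 {g : E3 → ℝ} (hg : Measurable g) {h : EuclideanSpace ℝ (Fin n) → E3}
    (hh : Measurable h) (i j : Fin n) : Measurable fun x => form2 g h x i j := by
  have hpdv (k : Fin n) : Measurable (pdv h k) := measurable_fderiv_apply_const ℝ h _
  unfold form2 det3
  fun_prop

theorem hasFDerivAt_comp_coord {f : ℝ → E3} (x : EuclideanSpace ℝ (Fin n)) (k : Fin n)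
    (hf : DifferentiableAt ℝ f (x k)) :
    HasFDerivAt (fun y : EuclideanSpace ℝ (Fin n) => f (y k))
      ((ContinuousLinearMap.toSpanSingleton ℝ (deriv f (x k))).comp
        (EuclideanSpace.proj k : EuclideanSpace ℝ (Fin n) →L[ℝ] ℝ)) x :=
  HasFDerivAt.comp x hf.hasDerivAt.hasFDerivAt
    (EuclideanSpace.proj k : EuclideanSpace ℝ (Fin n) →L[ℝ] ℝ).hasFDerivAt

theorem pdv_chord {f : ℝ → E3} (hf : Differentiable ℝ f) (a b i : Fin n)
    (x : EuclideanSpace ℝ (Fin n)) :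
    pdv (fun y : EuclideanSpace ℝ (Fin n) => f (y b) - f (y a)) i x =
      (if i = b then deriv f (x b) else 0) - if i = a then deriv f (x a) else 0 := by
  rw [pdv, ((hasFDerivAt_comp_coord x b (hf _)).fun_sub (hasFDerivAt_comp_coord x a (hf _))).fderiv]
  simp [eq_comm]

/-- `ptY` as a continuous linear map. -/
def ptYL : E6 →L[ℝ] E3 := LinearMap.toContinuousLinearMap
  { toFun := ptY
    map_add' := fun x y => by ext i; fin_cases i <;> rfl
    map_smul' := fun c x => by ext i; fin_cases i <;> rfl }

theorem pdv_ptY_sub {f : ℝ → E3} (hf : Differentiable ℝ f) (a i : Fin 6) (x : E6) :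
    pdv (fun y : E6 => ptY y - f (y a)) i x =
      ptY (EuclideanSpace.single i 1) - if i = a then deriv f (x a) else 0 := by
  have hptY : HasFDerivAt ptY ptYL x := ptYL.hasFDerivAt
  rw [pdv, (hptY.fun_sub (hasFDerivAt_comp_coord x a (hf _))).fderiv]
  simp [eq_comm, ptYL]

end Pullbacks

section Integrands

theorem abs_wedge22_eq_abs_det {g : E3 → ℝ} {F : Fin 2 → E4 → E3} {x : E4}
    (h0 : ∀ j k i, j ≠ k → form2 g (F k) x (Fin.castAdd 2 j) i = 0) :
    |wedge22 g (F 0) (F 1) x| =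
      |(Matrix.of fun k l => form2 g (F k) x (Fin.castAdd 2 k) (Fin.natAdd 2 l)).det| := by
  have hwedge : wedge22 g (F 0) (F 1) x = (1 / 4) * ∑ σ : Equiv.Perm (Fin 4),
      wedgeTerm ![0, 2] ![1, 3] (fun k => form2 g (F k) x) σ := by
    simp [wedge22, wedgeTerm, Fin.prod_univ_two, mul_assoc]
  rw [hwedge, abs_mul, abs_sum_wedgeTerm (a := Fin.castAdd 2) (b := Fin.natAdd 2) (by decide)
    (by decide) (fun k => form2_swap g (F k) x) h0]
  norm_num [← mul_assoc]

theorem abs_wedge222_eq_abs_det {g : E3 → ℝ} {F : Fin 3 → E6 → E3} {x : E6}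
    (h0 : ∀ j k i, j ≠ k → form2 g (F k) x (Fin.castAdd 3 j) i = 0) :
    |wedge222 g (F 0) (F 1) (F 2) x| =
      |(Matrix.of fun k l => form2 g (F k) x (Fin.castAdd 3 k) (Fin.natAdd 3 l)).det| := by
  have hwedge : wedge222 g (F 0) (F 1) (F 2) x = (1 / 8) * ∑ σ : Equiv.Perm (Fin 6),
      wedgeTerm ![0, 2, 4] ![1, 3, 5] (fun k => form2 g (F k) x) σ := by
    simp [wedge222, wedgeTerm, Fin.prod_univ_three, mul_assoc]
  rw [hwedge, abs_mul, abs_sum_wedgeTerm (a := Fin.castAdd 3) (b := Fin.natAdd 3) (by decide)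
    (by decide) (fun k => form2_swap g (F k) x) h0]
  norm_num [← mul_assoc]

/-- The coefficient of the pulled back area form on the chord from `f s` to `f t`, up to sign. -/
def chordDensity (f : ℝ → E3) (s t : ℝ) : ℝ :=
  ‖f t - f s‖⁻¹ ^ 3 * |det3 (f t - f s) (deriv f s) (deriv f t)|

/-- The moment about the point `p` of the velocity of `f` at time `t`. -/
def moment (f : ℝ → E3) (p : E3) (t : ℝ) : E3 := cross3 (p - f t) (deriv f t)

/-- The coefficient, up to sign, of the wedge product of the area forms pulled back along the
three legs of the tripod joining `p` to the points `f (t k)`. -/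
def tripodDensity (f : ℝ → E3) (p : E3) (t : Fin 3 → ℝ) : ℝ :=
  (∏ k, ‖p - f (t k)‖⁻¹ ^ 3) * |(Matrix.of fun k l => moment f p (t k) l).det|

theorem chordDensity_nonneg (f : ℝ → E3) (s t : ℝ) : 0 ≤ chordDensity f s t := by
  unfold chordDensity; positivity

theorem tripodDensity_nonneg (f : ℝ → E3) (p : E3) (t : Fin 3 → ℝ) : 0 ≤ tripodDensity f p t :=
  mul_nonneg (Finset.prod_nonneg fun k _ => by positivity) (abs_nonneg _)

theorem chordDensity_comm (f : ℝ → E3) (s t : ℝ) : chordDensity f s t = chordDensity f t s := by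
  have hdet : det3 (f t - f s) (deriv f s) (deriv f t) =
      det3 (f s - f t) (deriv f t) (deriv f s) := by
    simp only [det3, PiLp.sub_apply]; ring
  rw [chordDensity, chordDensity, norm_sub_rev, hdet]

theorem form2_chord {n : ℕ} {f : ℝ → E3} (hf : Differentiable ℝ f) (g : E3 → ℝ) {a b : Fin n}
    {x : EuclideanSpace ℝ (Fin n)} (hab : f (x b) ≠ f (x a)) (i j : Fin n) :
    form2 g (fun y => unitv (f (y b) - f (y a))) x i j =
      g (unitv (f (x b) - f (x a))) * ‖f (x b) - f (x a)‖⁻¹ ^ 3 *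
        det3 (f (x b) - f (x a))
          ((if i = b then deriv f (x b) else 0) - if i = a then deriv f (x a) else 0)
          ((if j = b then deriv f (x b) else 0) - if j = a then deriv f (x a) else 0) := by
  rw [form2_unitv g (V := fun y => f (y b) - f (y a))
    ((hasFDerivAt_comp_coord x b (hf _)).fun_sub
      (hasFDerivAt_comp_coord x a (hf _))).differentiableAt (sub_ne_zero.mpr hab),
    pdv_chord hf, pdv_chord hf]

theorem form2_chord_eq_zero {n : ℕ} {f : ℝ → E3} (hf : Differentiable ℝ f) (g : E3 → ℝ)
    {a b i : Fin n} {x : EuclideanSpace ℝ (Fin n)} (hab : f (x b) ≠ f (x a)) (hia : i ≠ a)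
    (hib : i ≠ b) (j : Fin n) :
    form2 g (fun y => unitv (f (y b) - f (y a))) x i j = 0 := by
  simp [form2_chord hf g hab, hia, hib, det3]

theorem abs_form2_chord {n : ℕ} {f : ℝ → E3} (hf : Differentiable ℝ f) (g : E3 → ℝ) {a b : Fin n}
    {x : EuclideanSpace ℝ (Fin n)} (hab : f (x b) ≠ f (x a)) :
    |form2 g (fun y => unitv (f (y b) - f (y a))) x a b| =
      |g (unitv (f (x b) - f (x a)))| * chordDensity f (x a) (x b) := by
  have hne : a ≠ b := by rintro rfl; exact hab rfl
  have hdet : |det3 (f (x b) - f (x a)) (-deriv f (x a)) (deriv f (x b))| =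
      |det3 (f (x b) - f (x a)) (deriv f (x a)) (deriv f (x b))| := by
    simp only [det3_eq_inner_cross3, map_neg, LinearMap.neg_apply, inner_neg_right, abs_neg]
  rw [form2_chord hf g hab, if_neg hne, if_pos rfl, if_pos rfl, if_neg hne.symm, zero_sub, sub_zero,
    abs_mul, abs_mul, hdet, chordDensity, mul_assoc, abs_pow, abs_inv, abs_norm]

theorem abs_omegaX {f : ℝ → E3} (hf : Differentiable ℝ f) (g : E3 → ℝ) {x : E4}
    (h02 : f (x 2) ≠ f (x 0)) (h13 : f (x 1) ≠ f (x 3)) :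
    |omegaX f g x| =
      |g (unitv (f (x 2) - f (x 0)))| * |g (unitv (f (x 1) - f (x 3)))| *
        (chordDensity f (x 0) (x 2) * chordDensity f (x 1) (x 3)) := by
  set F : Fin 2 → E4 → E3 :=
    ![fun y => unitv (f (y 2) - f (y 0)), fun y => unitv (f (y 1) - f (y 3))]
  have h0 (j k : Fin 2) (i : Fin 4) (hjk : j ≠ k) : form2 g (F k) x (Fin.castAdd 2 j) i = 0 := by
    fin_cases j <;> fin_cases k <;> first
      | exact absurd rfl hjk
      | exact form2_chord_eq_zero hf g h13 (by decide) (by decide) i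
      | exact form2_chord_eq_zero hf g h02 (by decide) (by decide) i
  have h03 : form2 g (F 0) x 0 3 = 0 := by
    rw [form2_swap, neg_eq_zero]
    exact form2_chord_eq_zero hf g h02 (by decide) (by decide) 0
  have h02' : |form2 g (F 0) x 0 2| =
      |g (unitv (f (x 2) - f (x 0)))| * chordDensity f (x 0) (x 2) := abs_form2_chord hf g h02
  have h13' : |form2 g (F 1) x 1 3| =
      |g (unitv (f (x 1) - f (x 3)))| * chordDensity f (x 1) (x 3) := by
    rw [form2_swap, abs_neg, chordDensity_comm]
    exact abs_form2_chord hf g h13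
  calc |omegaX f g x| = |form2 g (F 0) x 0 2 * form2 g (F 1) x 1 3 -
        form2 g (F 0) x 0 3 * form2 g (F 1) x 1 2| := by
        rw [omegaX, ← Matrix.det_fin_two_of]
        refine (abs_wedge22_eq_abs_det h0).trans ?_
        rw [Matrix.det_fin_two, Matrix.det_fin_two]
        rfl
    _ = _ := by
        rw [h03, zero_mul, sub_zero, abs_mul, h02', h13']
        ring

theorem form2_leg {f : ℝ → E3} (hf : Differentiable ℝ f) (g : E3 → ℝ) {a : Fin 6} {x : E6}
    (hx : ptY x ≠ f (x a)) (i j : Fin 6) :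
    form2 g (fun y => unitv (ptY y - f (y a))) x i j =
      g (unitv (ptY x - f (x a))) * ‖ptY x - f (x a)‖⁻¹ ^ 3 *
        det3 (ptY x - f (x a))
          (ptY (EuclideanSpace.single i 1) - if i = a then deriv f (x a) else 0)
          (ptY (EuclideanSpace.single j 1) - if j = a then deriv f (x a) else 0) := by
  have hptY : HasFDerivAt ptY ptYL x := ptYL.hasFDerivAt
  rw [form2_unitv g (V := fun y => ptY y - f (y a))
    (hptY.fun_sub (hasFDerivAt_comp_coord x a (hf _))).differentiableAt (sub_ne_zero.mpr hx),
    pdv_ptY_sub hf, pdv_ptY_sub hf]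

theorem ptY_single_castAdd (j : Fin 3) :
    ptY (EuclideanSpace.single (Fin.castAdd 3 j) 1) = 0 := by
  ext i; fin_cases j <;> fin_cases i <;> simp [ptY, mk3]

theorem ptY_single_natAdd (l : Fin 3) :
    ptY (EuclideanSpace.single (Fin.natAdd 3 l) 1) = EuclideanSpace.single l 1 := by
  ext i; fin_cases l <;> fin_cases i <;> simp [ptY, mk3]

theorem form2_leg_castAdd_natAdd {f : ℝ → E3} (hf : Differentiable ℝ f) (g : E3 → ℝ) {k : Fin 3}
    {x : E6} (hx : ptY x ≠ f (x (Fin.castAdd 3 k))) (l : Fin 3) :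
    form2 g (fun y => unitv (ptY y - f (y (Fin.castAdd 3 k)))) x (Fin.castAdd 3 k)
        (Fin.natAdd 3 l) =
      -g (unitv (ptY x - f (x (Fin.castAdd 3 k)))) *
        ‖ptY x - f (x (Fin.castAdd 3 k))‖⁻¹ ^ 3 *
          moment f (ptY x) (x (Fin.castAdd 3 k)) l := by
  have hne : Fin.natAdd 3 l ≠ Fin.castAdd 3 k := by
    simp only [ne_eq, Fin.ext_iff, Fin.val_natAdd, Fin.val_castAdd]
    omega
  rw [form2_leg hf g hx, if_pos rfl, if_neg hne, ptY_single_castAdd, ptY_single_natAdd, sub_zero,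
    zero_sub, det3_rotate, det3_eq_inner_cross3, map_neg, inner_neg_right,
    EuclideanSpace.inner_single_left, map_one, one_mul, mul_neg, neg_mul, neg_mul]
  rfl

theorem form2_leg_castAdd_eq_zero {f : ℝ → E3} (hf : Differentiable ℝ f) (g : E3 → ℝ)
    {j k : Fin 3} (hjk : j ≠ k) {x : E6} (hx : ptY x ≠ f (x (Fin.castAdd 3 k))) (i : Fin 6) :
    form2 g (fun y => unitv (ptY y - f (y (Fin.castAdd 3 k)))) x (Fin.castAdd 3 j) i = 0 := by
  have hne : Fin.castAdd 3 j ≠ Fin.castAdd 3 k := fun h => hjk (Fin.castAdd_injective 3 3 h)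
  rw [form2_leg hf g hx, if_neg hne, ptY_single_castAdd]
  simp [det3]

theorem abs_omegaY {f : ℝ → E3} (hf : Differentiable ℝ f) (g : E3 → ℝ) {x : E6}
    (hx : ∀ k, ptY x ≠ f (x (Fin.castAdd 3 k))) :
    |omegaY f g x| =
      |g (unitv (ptY x - f (x 0)))| * |g (unitv (f (x 1) - ptY x))| *
        |g (unitv (ptY x - f (x 2)))| * tripodDensity f (ptY x) fun k => x (Fin.castAdd 3 k) := by
  set F : Fin 3 → E6 → E3 := ![fun y => unitv (ptY y - f (y 0)), fun y => unitv (f (y 1) - ptY y),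
    fun y => unitv (ptY y - f (y 2))]
  set G : Fin 3 → E3 → ℝ := ![g, fun v => -g (-v), g]
  set v : Fin 3 → E3 := fun k => ptY x - f (x (Fin.castAdd 3 k))
  have hF (k : Fin 3) :
      form2 g (F k) = form2 (G k) fun y => unitv (ptY y - f (y (Fin.castAdd 3 k))) := by
    fin_cases k
    · rfl
    · have hneg : F 1 = fun y => -unitv (ptY y - f (y 1)) := by
        funext y
        rw [← unitv_neg, neg_sub]
        rfl
      exact (congrArg (form2 g) hneg).trans (form2_neg g _)
    · rfl
  have h0 (j k : Fin 3) (i : Fin 6) (hjk : j ≠ k) : form2 g (F k) x (Fin.castAdd 3 j) i = 0 := by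
    rw [hF, form2_leg_castAdd_eq_zero hf _ hjk (hx k)]
  have hentry (k l : Fin 3) : form2 g (F k) x (Fin.castAdd 3 k) (Fin.natAdd 3 l) =
      -G k (unitv (v k)) * ‖v k‖⁻¹ ^ 3 * moment f (ptY x) (x (Fin.castAdd 3 k)) l := by
    rw [hF, form2_leg_castAdd_natAdd hf _ (hx k)]
  have hG1 : |g (unitv (f (x 1) - ptY x))| = |G 1 (unitv (v 1))| := by
    simp only [G, Matrix.cons_val_one, Matrix.cons_val_zero, ← unitv_neg, abs_neg, v, neg_sub]
    rfl
  calc |omegaY f g x| = |(Matrix.of fun k l => -G k (unitv (v k)) * ‖v k‖⁻¹ ^ 3 *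
        Matrix.of (fun k l => moment f (ptY x) (x (Fin.castAdd 3 k)) l) k l).det| := by
        simp only [Matrix.of_apply, ← hentry]
        exact abs_wedge222_eq_abs_det h0
    _ = (∏ k, |G k (unitv (v k))|) * tripodDensity f (ptY x) fun k => x (Fin.castAdd 3 k) := by
        rw [Matrix.det_mul_column, abs_mul, Finset.abs_prod, tripodDensity, ← mul_assoc,
          ← Finset.prod_mul_distrib]
        simp only [abs_mul, abs_neg, abs_pow, abs_inv, abs_norm]
        rfl
    _ = _ := by
        rw [Fin.prod_univ_three, hG1]
        rfl

theorem measurable_unitv : Measurable unitv := by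
  unfold unitv; fun_prop

theorem measurable_omegaX {f : ℝ → E3} (hf : Measurable f) {g : E3 → ℝ} (hg : Measurable g) :
    Measurable (omegaX f g) := by
  have hchord (a b : Fin 4) : Measurable fun x : E4 => unitv (f (x a) - f (x b)) :=
    measurable_unitv.comp (by fun_prop)
  unfold omegaX wedge22
  exact (Finset.measurable_fun_sum _ fun σ _ => ((measurable_form2 hg (hchord _ _) _ _).const_mul
    _).mul (measurable_form2 hg (hchord _ _) _ _)).const_mul _

theorem measurable_omegaY {f : ℝ → E3} (hf : Measurable f) {g : E3 → ℝ} (hg : Measurable g) :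
    Measurable (omegaY f g) := by
  have hptY : Measurable ptY := ptYL.continuous.measurable
  have hleg (a : Fin 6) : Measurable fun x : E6 => unitv (ptY x - f (x a)) :=
    measurable_unitv.comp (by fun_prop)
  have hleg' (a : Fin 6) : Measurable fun x : E6 => unitv (f (x a) - ptY x) :=
    measurable_unitv.comp (by fun_prop)
  unfold omegaY wedge222
  exact (Finset.measurable_fun_sum _ fun σ _ => (((measurable_form2 hg (hleg _) _ _).const_mul
    _).mul (measurable_form2 hg (hleg' _) _ _)).mul (measurable_form2 hg (hleg _) _ _)).const_mul _

end Integrands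

section Knot

section Antilipschitz

variable {E : Type*} [NormedAddCommGroup E] [NormedSpace ℝ E] {f : ℝ → E}

theorem exists_abs_sub_le_mul_norm_sub_of_isCompact (hf : ContDiff ℝ 1 f)
    (hinj : Function.Injective f) (himm : ∀ t, deriv f t ≠ 0) {s : Set ℝ} (hs : IsCompact s) :
    ∃ C, ∀ a ∈ s, ∀ b ∈ s, |a - b| ≤ C * ‖f a - f b‖ := by
  have hlocal (q : ℝ × ℝ) :
      (fun p : ℝ × ℝ => p.1 - p.2) =O[𝓝 q] fun p : ℝ × ℝ => f p.1 - f p.2 := by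
    obtain ⟨a, b⟩ := q
    rcases eq_or_ne a b with rfl | hab
    · have hstrict : HasStrictDerivAt f (deriv f a) a :=
        hf.contDiffAt.hasStrictDerivAt one_ne_zero
      simpa only [nhds_prod_eq] using (hstrict.isTheta_sub (himm a)).isBigO_symm
    · have hnum : Tendsto (fun p : ℝ × ℝ => p.1 - p.2) (𝓝 (a, b)) (𝓝 (a - b)) :=
        Continuous.tendsto' (by fun_prop) _ _ rfl
      have hden : Tendsto (fun p : ℝ × ℝ => ‖f p.1 - f p.2‖) (𝓝 (a, b)) (𝓝 ‖f a - f b‖) :=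
        Continuous.tendsto' (by have := hf.continuous; fun_prop) _ _ rfl
      have hpos : 0 < ‖f a - f b‖ := norm_pos_iff.mpr (sub_ne_zero.mpr (hinj.ne hab))
      exact (hnum.isBigO_one ℝ).trans
        ((Asymptotics.isBigO_const_left_iff_pos_le_norm one_ne_zero).mpr
          ⟨_, half_pos hpos, hden.eventually_const_le (half_lt_self hpos)⟩)
  have hglobal : (fun p : ℝ × ℝ => p.1 - p.2) =O[𝓟 (s ×ˢ s)] fun p : ℝ × ℝ => f p.1 - f p.2 := by
    refine (hs.prod hs).induction_on (p := fun S => (fun p : ℝ × ℝ => p.1 - p.2) =O[𝓟 S]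
      fun p : ℝ × ℝ => f p.1 - f p.2) ?_ ?_ ?_ fun q _ => ?_
    · simp
    · exact fun S T hST hT => hT.mono (principal_mono.mpr hST)
    · exact fun S T hS hT => by simpa only [← sup_principal] using hS.sup hT
    · obtain ⟨C, hC⟩ := (hlocal q).bound
      exact ⟨_, mem_nhdsWithin_of_mem_nhds hC, Asymptotics.isBigO_principal.mpr ⟨C, fun _ => id⟩⟩
  obtain ⟨C, hC⟩ := Asymptotics.isBigO_principal.mp hglobal
  exact ⟨C, fun a ha b hb => hC (a, b) ⟨ha, hb⟩⟩

theorem exists_antilipschitzWith_of_hasCompactSupport (hf : ContDiff ℝ 1 f)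
    (hinj : Function.Injective f) (himm : ∀ t, deriv f t ≠ 0) {e : E} (he : ‖e‖ = 1)
    (hsupp : HasCompactSupport fun t => f t - t • e) : ∃ K, AntilipschitzWith K f := by
  obtain ⟨M, hM⟩ := hsupp.exists_bound_of_continuous (by have := hf.continuous; fun_prop)
  obtain ⟨R, hR⟩ := hsupp.isBounded.exists_norm_le
  obtain ⟨C, hC⟩ := exists_abs_sub_le_mul_norm_sub_of_isCompact hf hinj himm
    (isCompact_Icc (a := -(R + 4 * M)) (b := R + 4 * M))
  have hline {t : ℝ} (ht : R < |t|) : f t - t • e = 0 :=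
    Function.notMem_support.mp fun h => ht.not_ge (hR t (subset_tsupport _ h))
  have hdiff (a b : ℝ) : f a - f b = (a - b) • e + ((f a - a • e) - (f b - b • e)) := by
    module
  have hM0 : 0 ≤ M := (norm_nonneg _).trans (hM 0)
  have hbound (a b : ℝ) : |a - b| ≤ (max C 2) * ‖f a - f b‖ := by
    have h1 : 1 * ‖f a - f b‖ ≤ max C 2 * ‖f a - f b‖ := by gcongr; simp
    have h2 : 2 * ‖f a - f b‖ ≤ max C 2 * ‖f a - f b‖ := by gcongr; simp
    have hCm : C * ‖f a - f b‖ ≤ max C 2 * ‖f a - f b‖ := by gcongr; simp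
    by_cases hfar : 4 * M ≤ |a - b|
    · have hperturb : |a - b| ≤ ‖f a - f b‖ + (M + M) := by
        calc |a - b| = ‖(a - b) • e‖ := by rw [norm_smul, he, mul_one, Real.norm_eq_abs]
          _ = ‖(f a - f b) - ((f a - a • e) - (f b - b • e))‖ := by congr 1; module
          _ ≤ ‖f a - f b‖ + (M + M) :=
            norm_sub_le_of_le le_rfl (norm_sub_le_of_le (hM a) (hM b))
      linarith
    · by_cases hout : R < |a| ∧ R < |b|
      · rw [hdiff, hline hout.1, hline hout.2] at h1 ⊢
        simpa [norm_smul, he] using h1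
      · have hinside : |a| ≤ R + 4 * M ∧ |b| ≤ R + 4 * M := by grind
        exact (hC a (abs_le.mp hinside.1) b (abs_le.mp hinside.2)).trans hCm
  refine ⟨⟨max C 2, by positivity⟩, AntilipschitzWith.of_le_mul_dist fun a b => ?_⟩
  rw [dist_eq_norm, dist_eq_norm]
  exact hbound a b

end Antilipschitz

/-- A bi-Lipschitz long knot with Lipschitz velocity: the regularity on which the convergence of
the configuration space integrals depends. Both Lipschitz constants are merged into `L`. -/
structure IsC11LongKnot (f : ℝ → E3) (L K : NNReal) : Prop where
  differentiable : Differentiable ℝ f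
  lipschitz : LipschitzWith L f
  lipschitz_deriv : LipschitzWith L (deriv f)
  antilipschitz : AntilipschitzWith K f
  eq_line : ∀ t, 1 ≤ |t| → f t = mk3 t 0 0

theorem mk3_zero_zero (t : ℝ) : mk3 t 0 0 = t • mk3 1 0 0 := by
  ext i; fin_cases i <;> simp

theorem norm_mk3_one_zero_zero : ‖mk3 1 0 0‖ = 1 := by
  simp [EuclideanSpace.norm_eq, Fin.sum_univ_three]

theorem exists_isC11LongKnot {f : ℝ → E3} (hf : ContDiff ℝ 2 f) (hinj : Function.Injective f)
    (himm : ∀ t, deriv f t ≠ 0) (hline : ∀ t, 1 ≤ |t| → f t = mk3 t 0 0) :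
    ∃ L K, IsC11LongKnot f L K := by
  set e : E3 := mk3 1 0 0
  set h : ℝ → E3 := fun t => f t - t • e
  have hsupp : HasCompactSupport h := by
    refine HasCompactSupport.intro (isCompact_Icc (a := -1) (b := 1)) fun t ht => ?_
    rw [mem_Icc, ← abs_le, not_le] at ht
    rw [sub_eq_zero, hline t ht.le, mk3_zero_zero]
  have hh : ContDiff ℝ 2 h := by fun_prop
  have hfh (t : ℝ) : f t = h t + t • e := (sub_add_cancel _ _).symm
  have hderiv (t : ℝ) : deriv f t = deriv h t + e := by
    have hadd := (hh.differentiable two_ne_zero t).hasDerivAt.fun_add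
      ((hasDerivAt_id' t).smul_const e)
    rw [funext hfh, hadd.deriv, one_smul]
  obtain ⟨L₀, hL₀⟩ := hh.lipschitzWith_of_hasCompactSupport hsupp two_ne_zero
  have hh' : ContDiff ℝ 1 (deriv h) := ContDiff.deriv' (by rwa [one_add_one_eq_two])
  obtain ⟨L₁, hL₁⟩ := hh'.lipschitzWith_of_hasCompactSupport hsupp.deriv one_ne_zero
  obtain ⟨K, hK⟩ := exists_antilipschitzWith_of_hasCompactSupport (hf.of_le one_le_two) hinj himm
    norm_mk3_one_zero_zero hsupp
  have hlip : LipschitzWith (L₀ + ‖ContinuousLinearMap.toSpanSingleton ℝ e‖₊) f := by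
    rw [funext hfh]
    exact hL₀.add (ContinuousLinearMap.toSpanSingleton ℝ e).lipschitz
  have hlip' : LipschitzWith L₁ (deriv f) := by
    rw [funext hderiv]
    simpa using hL₁.add (LipschitzWith.const e)
  exact ⟨max _ L₁, K, hf.differentiable two_ne_zero, hlip.weaken (le_max_left _ _),
    hlip'.weaken (le_max_right _ _), hK, hline⟩

namespace IsC11LongKnot

variable {f : ℝ → E3} {L K : NNReal}

theorem norm_deriv_le (hf : IsC11LongKnot f L K) (t : ℝ) : ‖deriv f t‖ ≤ L :=
  norm_deriv_le_of_lipschitz hf.lipschitz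

theorem norm_deriv_sub_le (hf : IsC11LongKnot f L K) (s t : ℝ) :
    ‖deriv f t - deriv f s‖ ≤ L * |t - s| := by
  simpa [dist_eq_norm] using hf.lipschitz_deriv.dist_le_mul t s

theorem norm_sub_le (hf : IsC11LongKnot f L K) (s t : ℝ) : ‖f t - f s‖ ≤ L * |t - s| := by
  simpa [dist_eq_norm] using hf.lipschitz.dist_le_mul t s

theorem abs_sub_le (hf : IsC11LongKnot f L K) (s t : ℝ) : |t - s| ≤ K * ‖f t - f s‖ := by
  simpa [dist_eq_norm] using hf.antilipschitz.le_mul_dist t s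

theorem norm_taylor_le (hf : IsC11LongKnot f L K) (s t : ℝ) :
    ‖f t - f s - (t - s) • deriv f s‖ ≤ L * |t - s| ^ 2 := by
  have hderiv (x : ℝ) (_ : x ∈ uIcc s t) : HasDerivWithinAt (fun y => f y - y • deriv f s)
      (deriv f x - deriv f s) (uIcc s t) x := by
    simpa using ((hf.differentiable x).hasDerivAt.fun_sub
      ((hasDerivAt_id x).smul_const (deriv f s))).hasDerivWithinAt
  have hbound (x : ℝ) (hx : x ∈ uIcc s t) : ‖deriv f x - deriv f s‖ ≤ L * |t - s| :=
    (hf.norm_deriv_sub_le s x).trans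
      (mul_le_mul_of_nonneg_left (abs_sub_left_of_mem_uIcc hx) L.2)
  have hmean := (convex_uIcc s t).norm_image_sub_le_of_norm_hasDerivWithin_le hderiv hbound
    left_mem_uIcc right_mem_uIcc
  calc ‖f t - f s - (t - s) • deriv f s‖ = ‖f t - t • deriv f s - (f s - s • deriv f s)‖ := by
        congr 1; module
    _ ≤ L * |t - s| * ‖t - s‖ := hmean
    _ = L * |t - s| ^ 2 := by rw [Real.norm_eq_abs]; ring

theorem deriv_eq (hf : IsC11LongKnot f L K) {t : ℝ} (ht : 1 < |t|) : deriv f t = mk3 1 0 0 := by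
  have hline : f =ᶠ[𝓝 t] fun y => y • mk3 1 0 0 := by
    filter_upwards [continuous_abs.continuousAt.eventually_const_lt ht] with y hy
    rw [hf.eq_line y hy.le, mk3_zero_zero]
  rw [hline.deriv_eq]
  simpa using ((hasDerivAt_id t).smul_const (mk3 1 0 0)).deriv

theorem antilipschitz_const_pos (hf : IsC11LongKnot f L K) : 0 < (K : ℝ) := by
  have h := hf.abs_sub_le 0 1
  by_contra hK
  rw [le_antisymm (not_lt.mp hK) K.2] at h
  norm_num at h

end IsC11LongKnot

end Knot

section Kernel

/-- The radial kernel `s ^ (-α) * (1 + s) ^ (-β)`, with a singularity of order `α` at the origin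
and decay of order `α + β` at infinity. -/
def kernel (α β s : ℝ) : ℝ := s ^ (-α) * (1 + s) ^ (-β)

variable {α β s t : ℝ}

theorem kernel_nonneg (hs : 0 ≤ s) : 0 ≤ kernel α β s :=
  mul_nonneg (Real.rpow_nonneg hs _) (Real.rpow_nonneg (by linarith) _)

theorem kernel_le_kernel (hα : 0 ≤ α) (hβ : 0 ≤ β) (hs : 0 < s) (hst : s ≤ t) :
    kernel α β t ≤ kernel α β s :=
  mul_le_mul (Real.rpow_le_rpow_of_nonpos hs hst (by linarith))
    (Real.rpow_le_rpow_of_nonpos (by linarith) (by linarith) (by linarith))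
    (Real.rpow_nonneg (by linarith) _) (Real.rpow_nonneg hs.le _)

theorem kernel_mul_kernel (hs : 0 < s) (α β γ δ : ℝ) :
    kernel α β s * kernel γ δ s = kernel (α + γ) (β + δ) s := by
  simp only [kernel, neg_add, Real.rpow_add hs, Real.rpow_add (add_pos one_pos hs)]
  ring

theorem integrableOn_kernel (hα : α < 1) (hαβ : 1 < α + β) :
    IntegrableOn (kernel α β) (Ioi 0) := by
  have hmeas : Measurable (kernel α β) := by unfold kernel; fun_prop
  rw [← Ioc_union_Ioi_eq_Ioi (zero_le_one' ℝ)]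
  refine IntegrableOn.union ?_ ?_
  · have hnear : IntegrableOn (fun r : ℝ => r ^ (-α)) (Ioc 0 1) :=
      (intervalIntegrable_iff_integrableOn_Ioc_of_le zero_le_one).mp
        (intervalIntegral.intervalIntegrable_rpow' (by linarith))
    refine hnear.mono' hmeas.aestronglyMeasurable ?_
    filter_upwards [ae_restrict_mem measurableSet_Ioc] with r hr
    rw [Real.norm_of_nonneg (kernel_nonneg hr.1.le)]
    exact mul_le_of_le_one_right (Real.rpow_nonneg hr.1.le _)
      (Real.rpow_le_one_of_one_le_of_nonpos (by linarith [hr.1]) (by linarith))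
  · have hfar : IntegrableOn (fun r : ℝ => r ^ (-α - β)) (Ioi 1) :=
      integrableOn_Ioi_rpow_of_lt (by linarith) one_pos
    refine hfar.mono' hmeas.aestronglyMeasurable ?_
    filter_upwards [ae_restrict_mem measurableSet_Ioi] with r hr
    have hr0 : 0 < r := one_pos.trans hr
    rw [Real.norm_of_nonneg (kernel_nonneg hr0.le), sub_eq_add_neg, Real.rpow_add hr0]
    exact mul_le_mul_of_nonneg_left
      (Real.rpow_le_rpow_of_nonpos hr0 (by linarith) (by linarith)) (Real.rpow_nonneg hr0.le _)

theorem integrable_kernel_norm {E : Type*} [NormedAddCommGroup E] [NormedSpace ℝ E]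
    [FiniteDimensional ℝ E] [Nontrivial E] [MeasurableSpace E] [BorelSpace E] (μ : Measure E)
    [μ.IsAddHaarMeasure] (hα : α < Module.finrank ℝ E)
    (hαβ : Module.finrank ℝ E < α + β) : Integrable (fun x => kernel α β ‖x‖) μ := by
  have hdim : ((Module.finrank ℝ E - 1 : ℕ) : ℝ) = Module.finrank ℝ E - 1 :=
    Nat.cast_pred Module.finrank_pos
  rw [integrable_fun_norm_addHaar μ (f := kernel α β)]
  refine (integrableOn_kernel (α := α - (Module.finrank ℝ E - 1)) (β := β) (by linarith)
    (by linarith)).congr_fun (fun r (hr : 0 < r) => ?_) measurableSet_Ioi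
  rw [smul_eq_mul, ← Real.rpow_natCast, hdim, kernel, kernel, ← mul_assoc, ← Real.rpow_add hr]
  congr 2
  ring

theorem integrable_kernel_mul_abs {c : ℝ} (hc : 0 < c) (hα : α < 1)
    (hαβ : 1 < α + β) : Integrable fun x : ℝ => kernel α β (c * |x|) := by
  have hnorm : Integrable fun x : ℝ => kernel α β ‖x‖ :=
    integrable_kernel_norm volume (by simpa) (by simpa)
  simpa [abs_mul, abs_of_pos hc] using hnorm.comp_mul_left' hc.ne'

end Kernel

section Bounds

/-- The indicator function of the interval `[-1, 1]` outside which a long knot is standard. -/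
def coreIndicator : ℝ → ℝ := (Icc (-1) 1).indicator 1

theorem coreIndicator_nonneg (t : ℝ) : 0 ≤ coreIndicator t :=
  indicator_nonneg (fun _ _ => zero_le_one) t

theorem coreIndicator_of_abs_le {t : ℝ} (ht : |t| ≤ 1) : coreIndicator t = 1 :=
  indicator_of_mem (s := Icc (-1 : ℝ) 1) (abs_le.mp ht) 1

theorem integrable_coreIndicator : Integrable coreIndicator :=
  (integrable_indicator_iff measurableSet_Icc).mpr (integrableOn_const (by simp))

theorem inv_cube_mul_min_le_kernel {r : ℝ} (hr : 0 < r) :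
    r⁻¹ ^ 3 * min r (r ^ 3) ≤ 4 * kernel 0 2 r := by
  have hkernel : kernel 0 2 r = ((1 + r) ^ 2)⁻¹ := by
    rw [kernel, neg_zero, Real.rpow_zero, one_mul, Real.rpow_neg (by positivity), Real.rpow_ofNat]
  rw [hkernel, inv_pow, inv_mul_le_iff₀ (by positivity), ← div_eq_mul_inv, ← mul_div_assoc,
    le_div_iff₀ (by positivity)]
  rcases le_total r 1 with h1 | h1
  · calc min r (r ^ 3) * (1 + r) ^ 2 ≤ r ^ 3 * (1 + 1) ^ 2 := by gcongr; exact min_le_right _ _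
      _ = r ^ 3 * 4 := by norm_num
  · calc min r (r ^ 3) * (1 + r) ^ 2 ≤ r * (r + r) ^ 2 := by gcongr; exact min_le_left _ _
      _ = r ^ 3 * 4 := by ring

theorem moment_sub_moment (f : ℝ → E3) (p : E3) (a b : ℝ) :
    moment f p b - moment f p a = cross3 (p - f a) (deriv f b - deriv f a) +
      cross3 (f a - f b - (a - b) • deriv f b) (deriv f b) := by
  have hself : cross3 ((a - b) • deriv f b) (deriv f b) = 0 := by
    rw [map_smul, LinearMap.smul_apply, cross3_self, smul_zero]
  simp only [moment, map_sub, LinearMap.sub_apply] at hself ⊢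
  rw [hself]
  abel

namespace IsC11LongKnot

variable {f : ℝ → E3} {L K : NNReal}

theorem chordDensity_eq_zero (hf : IsC11LongKnot f L K) {s t : ℝ} (hs : 1 < |s|) (ht : 1 < |t|) :
    chordDensity f s t = 0 := by
  rw [chordDensity, hf.deriv_eq hs, hf.deriv_eq ht, det3_eq_inner_cross3, cross3_self,
    inner_zero_right, abs_zero, mul_zero]

/-- The determinant vanishes to third order on the diagonal: the chord may be replaced by its
second order Taylor remainder, and one velocity by the difference of the two. -/
theorem abs_det3_chord_le (hf : IsC11LongKnot f L K) (s t : ℝ) :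
    |det3 (f t - f s) (deriv f s) (deriv f t)| ≤ L ^ 3 * min |t - s| (|t - s| ^ 3) := by
  have htaylor : det3 (f t - f s) (deriv f s) (deriv f t) =
      det3 (f t - f s - (t - s) • deriv f s) (deriv f s) (deriv f t - deriv f s) := by
    simp only [det3, PiLp.sub_apply, PiLp.smul_apply, smul_eq_mul]
    ring
  rw [mul_min_of_nonneg _ _ (by positivity)]
  refine le_min ?_ ?_
  · calc |det3 (f t - f s) (deriv f s) (deriv f t)|
        ≤ ‖f t - f s‖ * ‖deriv f s‖ * ‖deriv f t‖ := abs_det3_le _ _ _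
      _ ≤ (L * |t - s|) * L * L := by
        gcongr
        exacts [hf.norm_sub_le _ _, hf.norm_deriv_le _, hf.norm_deriv_le _]
      _ = L ^ 3 * |t - s| := by ring
  · calc |det3 (f t - f s) (deriv f s) (deriv f t)|
        ≤ ‖f t - f s - (t - s) • deriv f s‖ * ‖deriv f s‖ * ‖deriv f t - deriv f s‖ :=
        htaylor ▸ abs_det3_le _ _ _
      _ ≤ (L * |t - s| ^ 2) * L * (L * |t - s|) := by
        gcongr
        exacts [hf.norm_taylor_le _ _, hf.norm_deriv_le _, hf.norm_deriv_sub_le _ _]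
      _ = L ^ 3 * |t - s| ^ 3 := by ring

theorem chordDensity_le (hf : IsC11LongKnot f L K) {s t : ℝ} (hst : s ≠ t) :
    chordDensity f s t ≤
      4 * (K * L) ^ 3 * ((coreIndicator s + coreIndicator t) * kernel 0 2 |t - s|) := by
  set r := |t - s|
  have hr : 0 < r := abs_pos.mpr (sub_ne_zero.mpr hst.symm)
  have hinv : ‖f t - f s‖⁻¹ ≤ K * r⁻¹ := by
    rw [← div_eq_mul_inv, ← one_div, div_le_div_iff₀ _ hr, one_mul]
    · exact hf.abs_sub_le s t
    · exact norm_pos_iff.mpr (sub_ne_zero.mpr (hf.antilipschitz.injective.ne hst.symm))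
  have hkernel : chordDensity f s t ≤ 4 * (K * L) ^ 3 * kernel 0 2 r :=
    calc chordDensity f s t ≤ (K * r⁻¹) ^ 3 * (L ^ 3 * min r (r ^ 3)) := by
          unfold chordDensity
          gcongr
          exact hf.abs_det3_chord_le s t
      _ = (K * L) ^ 3 * (r⁻¹ ^ 3 * min r (r ^ 3)) := by ring
      _ ≤ (K * L) ^ 3 * (4 * kernel 0 2 r) :=
        mul_le_mul_of_nonneg_left (inv_cube_mul_min_le_kernel hr) (by positivity)
      _ = 4 * (K * L) ^ 3 * kernel 0 2 r := by ring
  have hker := kernel_nonneg (α := 0) (β := 2) hr.le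
  have hs0 := coreIndicator_nonneg s
  have ht0 := coreIndicator_nonneg t
  by_cases hout : 1 < |s| ∧ 1 < |t|
  · rw [hf.chordDensity_eq_zero hout.1 hout.2]
    positivity
  · have hcore : 1 ≤ coreIndicator s + coreIndicator t := by
      rcases not_and_or.mp hout with h | h <;>
        linarith [coreIndicator_of_abs_le (not_lt.mp h)]
    refine hkernel.trans ?_
    gcongr
    exact le_mul_of_one_le_left hker hcore

theorem norm_moment_le (hf : IsC11LongKnot f L K) (p : E3) (t : ℝ) :
    ‖moment f p t‖ ≤ L * ‖p - f t‖ :=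
  calc ‖moment f p t‖ ≤ ‖p - f t‖ * ‖deriv f t‖ := norm_cross3_le _ _
    _ ≤ L * ‖p - f t‖ := by rw [mul_comm]; gcongr; exact hf.norm_deriv_le t

theorem abs_sub_le_of_norm_le (hf : IsC11LongKnot f L K) {p : E3} {a b : ℝ}
    (hab : ‖p - f a‖ ≤ ‖p - f b‖) : |b - a| ≤ 2 * K * ‖p - f b‖ :=
  calc |b - a| ≤ K * ‖f b - f a‖ := hf.abs_sub_le a b
    _ = K * ‖(p - f a) - (p - f b)‖ := by rw [sub_sub_sub_cancel_left]
    _ ≤ K * (‖p - f b‖ + ‖p - f b‖) := by gcongr; exact norm_sub_le_of_le hab le_rfl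
    _ = 2 * K * ‖p - f b‖ := by ring

theorem norm_moment_sub_moment_le (hf : IsC11LongKnot f L K) {p : E3} {a b : ℝ}
    (hab : ‖p - f a‖ ≤ ‖p - f b‖) :
    ‖moment f p b - moment f p a‖ * (1 + ‖p - f b‖) ≤
      (2 * L + 2 * K * L + 4 * K ^ 2 * L ^ 2) * ‖p - f b‖ ^ 2 := by
  set v := ‖p - f b‖
  have hdist : |b - a| ≤ 2 * K * v := hf.abs_sub_le_of_norm_le hab
  have hlinear : ‖moment f p b - moment f p a‖ ≤ 2 * L * v :=
    calc ‖moment f p b - moment f p a‖ ≤ L * v + L * v :=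
          norm_sub_le_of_le (hf.norm_moment_le p b) ((hf.norm_moment_le p a).trans (by gcongr))
      _ = 2 * L * v := by ring
  have hquadratic : ‖moment f p b - moment f p a‖ ≤ (2 * K * L + 4 * K ^ 2 * L ^ 2) * v ^ 2 :=
    calc ‖moment f p b - moment f p a‖
        ≤ ‖p - f a‖ * ‖deriv f b - deriv f a‖ +
          ‖f a - f b - (a - b) • deriv f b‖ * ‖deriv f b‖ :=
        moment_sub_moment f p a b ▸ norm_add_le_of_le (norm_cross3_le _ _) (norm_cross3_le _ _)
      _ ≤ v * (L * |b - a|) + (L * |a - b| ^ 2) * L := by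
        gcongr
        exacts [hf.norm_deriv_sub_le a b, hf.norm_taylor_le b a, hf.norm_deriv_le b]
      _ ≤ v * (L * (2 * K * v)) + (L * (2 * K * v) ^ 2) * L := by
        rw [abs_sub_comm a b]
        gcongr
      _ = (2 * K * L + 4 * K ^ 2 * L ^ 2) * v ^ 2 := by ring
  calc ‖moment f p b - moment f p a‖ * (1 + v)
      = ‖moment f p b - moment f p a‖ + ‖moment f p b - moment f p a‖ * v := by ring
    _ ≤ (2 * K * L + 4 * K ^ 2 * L ^ 2) * v ^ 2 + (2 * L * v) * v := by gcongr
    _ = (2 * L + 2 * K * L + 4 * K ^ 2 * L ^ 2) * v ^ 2 := by ring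

end IsC11LongKnot

end Bounds

section TripodBound

theorem tripodDensity_comp_perm (f : ℝ → E3) (p : E3) (t : Fin 3 → ℝ) (π : Equiv.Perm (Fin 3)) :
    tripodDensity f p (t ∘ π) = tripodDensity f p t := by
  have hdet : |(Matrix.of fun k l => moment f p (t (π k)) l).det| =
      |(Matrix.of fun k l => moment f p (t k) l).det| := by
    have hpermute := Matrix.det_permute π (Matrix.of fun k l => moment f p (t k) l)
    rw [show (Matrix.of fun k l => moment f p (t (π k)) l) =
      (Matrix.of fun k l => moment f p (t k) l).submatrix π id from rfl, hpermute, abs_mul,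
      Int.cast_abs.symm]
    simp
  rw [tripodDensity, tripodDensity, ← Equiv.prod_comp π fun k => ‖p - f (t k)‖⁻¹ ^ 3, ← hdet]
  rfl

theorem det_moment_eq_det3_sub (f : ℝ → E3) (p : E3) (t : Fin 3 → ℝ) :
    (Matrix.of fun k l => moment f p (t k) l).det =
      det3 (moment f p (t 0)) (moment f p (t 1) - moment f p (t 0))
        (moment f p (t 2) - moment f p (t 0)) := by
  simp only [Matrix.det_fin_three, det3, Matrix.of_apply, PiLp.sub_apply]
  ring

theorem tripodDensity_le_mul_norm_moment_sub (f : ℝ → E3) (p : E3) (t : Fin 3 → ℝ) :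
    tripodDensity f p t ≤ (‖p - f (t 0)‖⁻¹ ^ 3 * ‖moment f p (t 0)‖) *
      (‖p - f (t 1)‖⁻¹ ^ 3 * ‖moment f p (t 1) - moment f p (t 0)‖) *
      (‖p - f (t 2)‖⁻¹ ^ 3 * ‖moment f p (t 2) - moment f p (t 0)‖) := by
  rw [tripodDensity, det_moment_eq_det3_sub]
  refine (mul_le_mul_of_nonneg_left (abs_det3_le _ _ _)
    (Finset.prod_nonneg fun k _ => by positivity)).trans_eq ?_
  rw [Fin.prod_univ_three]
  ring

/-- A function of the tripods at `p`, integrable as soon as `f` is measurable, whose sum over the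
orderings of the legs dominates `tripodDensity`; the leg of index `0` is meant to be the shortest.
The exponents split `(v * (1 + v))⁻¹`, for the length `v` of a longer leg, into a factor that is
integrable along the knot and a factor absorbed by the shortest leg. -/
def tripodMajorant (f : ℝ → E3) (K : NNReal) (p : E3) (t : Fin 3 → ℝ) : ℝ :=
  (coreIndicator (t 0) + coreIndicator (t 1)) *
    kernel (3 / 4) (1 / 2) ((2 * K)⁻¹ * |t 1 - t 0|) *
    kernel (3 / 4) (1 / 2) ((2 * K)⁻¹ * |t 2 - t 0|) * kernel (5 / 2) 1 ‖p - f (t 0)‖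

theorem tripodMajorant_nonneg (f : ℝ → E3) (K : NNReal) (p : E3) (t : Fin 3 → ℝ) :
    0 ≤ tripodMajorant f K p t :=
  mul_nonneg (mul_nonneg (mul_nonneg
    (add_nonneg (coreIndicator_nonneg _) (coreIndicator_nonneg _))
    (kernel_nonneg (by positivity))) (kernel_nonneg (by positivity)))
    (kernel_nonneg (norm_nonneg _))

theorem exists_perm_apply_zero_eq (i j : Fin 3) :
    ∃ π : Equiv.Perm (Fin 3), π 0 = i ∧ (π 0 = j ∨ π 1 = j) := by
  revert i j
  decide

namespace IsC11LongKnot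

variable {f : ℝ → E3} {L K : NNReal}

theorem tripodDensity_eq_zero (hf : IsC11LongKnot f L K) (p : E3) {t : Fin 3 → ℝ}
    (ht : ∀ k, 1 < |t k|) : tripodDensity f p t = 0 := by
  have hmoment (k : Fin 3) : moment f p (t k) = cross3 p (mk3 1 0 0) := by
    rw [moment, hf.deriv_eq (ht k), hf.eq_line _ (ht k).le, mk3_zero_zero, map_sub, map_smul,
      LinearMap.sub_apply, LinearMap.smul_apply, cross3_self, smul_zero, sub_zero]
  rw [tripodDensity, det_moment_eq_det3_sub, hmoment, hmoment, sub_self, det3_rotate,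
    det3_eq_inner_cross3, hmoment, sub_self, inner_zero_left, abs_zero, mul_zero]

theorem inv_cube_mul_norm_moment_sub_le (hf : IsC11LongKnot f L K) {p : E3} {a b : ℝ}
    (hp : p ≠ f a) (hab : a ≠ b) (hle : ‖p - f a‖ ≤ ‖p - f b‖) :
    ‖p - f b‖⁻¹ ^ 3 * ‖moment f p b - moment f p a‖ ≤
      (2 * L + 2 * K * L + 4 * K ^ 2 * L ^ 2) *
        (kernel (1 / 4) (1 / 2) ‖p - f a‖ * kernel (3 / 4) (1 / 2) ((2 * K)⁻¹ * |b - a|)) := by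
  have hK := hf.antilipschitz_const_pos
  set M : ℝ := 2 * L + 2 * K * L + 4 * K ^ 2 * L ^ 2
  set u := ‖p - f a‖
  set v := ‖p - f b‖
  have hu : 0 < u := norm_pos_iff.mpr (sub_ne_zero.mpr hp)
  have hv : 0 < v := hu.trans_le hle
  have hdist : 0 < (2 * K : ℝ)⁻¹ * |b - a| :=
    mul_pos (by positivity) (abs_pos.mpr (sub_ne_zero.mpr hab.symm))
  have hdist_le : (2 * K : ℝ)⁻¹ * |b - a| ≤ v := by
    rw [inv_mul_le_iff₀ (by positivity)]
    exact hf.abs_sub_le_of_norm_le hle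
  have hsplit : kernel (1 / 4) (1 / 2) v * kernel (3 / 4) (1 / 2) v = v⁻¹ * (1 + v)⁻¹ := by
    rw [kernel_mul_kernel hv, kernel]
    norm_num [Real.rpow_neg_one]
  calc v⁻¹ ^ 3 * ‖moment f p b - moment f p a‖
      ≤ v⁻¹ ^ 3 * (M * v ^ 2 * (1 + v)⁻¹) := by
        gcongr
        rw [← div_eq_mul_inv, le_div_iff₀ (by positivity)]
        exact hf.norm_moment_sub_moment_le hle
    _ = M * (kernel (1 / 4) (1 / 2) v * kernel (3 / 4) (1 / 2) v) := by
        rw [hsplit]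
        field_simp
    _ ≤ M * (kernel (1 / 4) (1 / 2) u * kernel (3 / 4) (1 / 2) ((2 * K)⁻¹ * |b - a|)) := by
        refine mul_le_mul_of_nonneg_left (mul_le_mul ?_ ?_ ?_ ?_) (by positivity)
        · exact kernel_le_kernel (by norm_num) (by norm_num) hu hle
        · exact kernel_le_kernel (by norm_num) (by norm_num) hdist hdist_le
        · exact kernel_nonneg hv.le
        · exact kernel_nonneg hu.le

theorem tripodDensity_le_of_shortest (hf : IsC11LongKnot f L K) {p : E3} {t : Fin 3 → ℝ}
    (hp : p ≠ f (t 0)) (ht : Function.Injective t) (hmin : ∀ k, ‖p - f (t 0)‖ ≤ ‖p - f (t k)‖) :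
    tripodDensity f p t ≤ L * (2 * L + 2 * K * L + 4 * K ^ 2 * L ^ 2) ^ 2 *
      (kernel (3 / 4) (1 / 2) ((2 * K)⁻¹ * |t 1 - t 0|) *
        kernel (3 / 4) (1 / 2) ((2 * K)⁻¹ * |t 2 - t 0|) * kernel (5 / 2) 1 ‖p - f (t 0)‖) := by
  set M : ℝ := 2 * L + 2 * K * L + 4 * K ^ 2 * L ^ 2
  set W := fun k => moment f p (t k)
  set v := fun k => ‖p - f (t k)‖
  set φ := fun k => kernel (3 / 4) (1 / 2) ((2 * K)⁻¹ * |t k - t 0|)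
  set ψ := kernel (1 / 4) (1 / 2) (v 0)
  have hv : 0 < v 0 := norm_pos_iff.mpr (sub_ne_zero.mpr hp)
  have hleg (k : Fin 3) (hk : 0 ≠ k) : (v k)⁻¹ ^ 3 * ‖W k - W 0‖ ≤ M * (ψ * φ k) :=
    hf.inv_cube_mul_norm_moment_sub_le hp (ht.ne hk) (hmin k)
  have hfirst : (v 0)⁻¹ ^ 3 * ‖W 0‖ ≤ L * kernel 2 0 (v 0) :=
    calc (v 0)⁻¹ ^ 3 * ‖W 0‖ ≤ (v 0)⁻¹ ^ 3 * (L * v 0) := by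
          gcongr
          exact hf.norm_moment_le p (t 0)
      _ = L * kernel 2 0 (v 0) := by
          rw [kernel, neg_zero, Real.rpow_zero, mul_one, Real.rpow_neg hv.le, Real.rpow_ofNat]
          field_simp
  have hψ : 0 ≤ ψ := kernel_nonneg hv.le
  have hker : kernel (5 / 2) 1 (v 0) = kernel 2 0 (v 0) * ψ * ψ := by
    rw [kernel_mul_kernel hv, kernel_mul_kernel hv]
    norm_num
  calc tripodDensity f p t
      ≤ ((v 0)⁻¹ ^ 3 * ‖W 0‖) * ((v 1)⁻¹ ^ 3 * ‖W 1 - W 0‖) * ((v 2)⁻¹ ^ 3 * ‖W 2 - W 0‖) :=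
        tripodDensity_le_mul_norm_moment_sub f p t
    _ ≤ (L * kernel 2 0 (v 0)) * (M * (ψ * φ 1)) * (M * (ψ * φ 2)) := by
        have hker0 : 0 ≤ kernel 2 0 (v 0) := kernel_nonneg hv.le
        have hφ1 : 0 ≤ φ 1 := kernel_nonneg (by positivity)
        refine mul_le_mul (mul_le_mul hfirst (hleg 1 (by decide)) ?_ ?_) (hleg 2 (by decide)) ?_ ?_
          <;> positivity
    _ = L * M ^ 2 * (φ 1 * φ 2 * kernel (5 / 2) 1 (v 0)) := by
        rw [hker]
        ring

theorem tripodDensity_le (hf : IsC11LongKnot f L K) {p : E3} {t : Fin 3 → ℝ}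
    (hp : ∀ k, p ≠ f (t k)) (ht : Function.Injective t) :
    tripodDensity f p t ≤ L * (2 * L + 2 * K * L + 4 * K ^ 2 * L ^ 2) ^ 2 *
      ∑ π : Equiv.Perm (Fin 3), tripodMajorant f K p (t ∘ π) := by
  have hsum : 0 ≤ ∑ π : Equiv.Perm (Fin 3), tripodMajorant f K p (t ∘ π) :=
    Finset.sum_nonneg fun π _ => tripodMajorant_nonneg f K p _
  by_cases hout : ∀ k, 1 < |t k|
  · rw [hf.tripodDensity_eq_zero p hout]
    positivity
  obtain ⟨j, hj⟩ : ∃ j, |t j| ≤ 1 := by simpa using hout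
  obtain ⟨i, hi⟩ := Finite.exists_min fun k => ‖p - f (t k)‖
  obtain ⟨π, rfl, hπj⟩ := exists_perm_apply_zero_eq i j
  have hcore : 1 ≤ coreIndicator (t (π 0)) + coreIndicator (t (π 1)) := by
    have h0 := coreIndicator_nonneg (t (π 0))
    have h1 := coreIndicator_nonneg (t (π 1))
    rcases hπj with rfl | rfl <;> linarith [coreIndicator_of_abs_le hj]
  have hmajorant := Finset.single_le_sum (s := Finset.univ)
    (f := fun π : Equiv.Perm (Fin 3) => tripodMajorant f K p (t ∘ π))
    (fun π _ => tripodMajorant_nonneg f K p _) (Finset.mem_univ π)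
  rw [← tripodDensity_comp_perm f p t π]
  refine (hf.tripodDensity_le_of_shortest (t := t ∘ π) (hp _) (ht.comp π.injective)
    fun k => hi (π k)).trans ?_
  refine mul_le_mul_of_nonneg_left (le_trans ?_ hmajorant) (by positivity)
  simp only [tripodMajorant, mul_assoc]
  exact le_mul_of_one_le_left (mul_nonneg (kernel_nonneg (by positivity))
    (mul_nonneg (kernel_nonneg (by positivity)) (kernel_nonneg (norm_nonneg _)))) hcore

end IsC11LongKnot

end TripodBound

section Integrability

theorem integrable_comp_injective_linearMap {E F : Type*} [NormedAddCommGroup E]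
    [NormedSpace ℝ E] [FiniteDimensional ℝ E] [MeasurableSpace E] [BorelSpace E]
    [NormedAddCommGroup F] [NormedSpace ℝ F] [FiniteDimensional ℝ F] [MeasurableSpace F]
    [BorelSpace F] {μ : Measure E} [μ.IsAddHaarMeasure] {ν : Measure F} [ν.IsAddHaarMeasure]
    {e : E →ₗ[ℝ] F} (he : Function.Injective e)
    (hdim : Module.finrank ℝ E = Module.finrank ℝ F) {φ : F → ℝ} (hφ : Integrable φ ν) :
    Integrable (fun x => φ (e x)) μ := by
  let e' : E ≃L[ℝ] F := (LinearEquiv.ofInjectiveOfFinrankEq e he hdim).toContinuousLinearEquiv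
  have hhaar : (μ.map e').IsAddHaarMeasure := e'.isAddHaarMeasure_map μ
  have hmap : Integrable φ (μ.map e') := by
    rw [Measure.isAddLeftInvariant_eq_smul (μ.map e') ν]
    exact hφ.smul_measure_nnreal
  exact hmap.comp_measurable e'.continuous.measurable

theorem integrable_mul_comp_sub {Y G : Type*} [MeasurableSpace Y] [AddGroup G] [MeasurableSpace G]
    [MeasurableAdd G] [MeasurableSub₂ G] {μ : Measure Y} [SFinite μ] {ν : Measure G} [SFinite ν]
    [ν.IsAddRightInvariant] {c : Y → ℝ} (hc : Integrable c μ) {k : G → ℝ} (hk : Integrable k ν)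
    {h : Y → G} (hh : Measurable h) :
    Integrable (fun z : Y × G => c z.1 * k (z.2 - h z.1)) (μ.prod ν) := by
  have hshear : MeasurePreserving (fun z : Y × G => (z.1, z.2 - h z.1)) (μ.prod ν) (μ.prod ν) :=
    (MeasurePreserving.id μ).skew_product (g := fun y p => p - h y)
      (by unfold Function.uncurry; fun_prop)
      (ae_of_all _ fun y => (measurePreserving_sub_right ν (h y)).map_eq)
  exact hshear.integrable_comp_of_integrable (hc.mul_prod hk)

theorem integrable_add_mul_comp_abs_sub {c k : ℝ → ℝ} (hc : Integrable c)
    (hk : Integrable fun x => k |x|) :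
    Integrable fun z : ℝ × ℝ => (c z.1 + c z.2) * k |z.2 - z.1| := by
  have hfst : Integrable fun z : ℝ × ℝ => c z.1 * k |z.2 - z.1| :=
    integrable_mul_comp_sub hc hk measurable_id
  have hsnd : Integrable fun z : ℝ × ℝ => c z.2 * k |z.1 - z.2| := hfst.swap
  refine (hfst.add hsnd).congr (ae_of_all _ fun z => ?_)
  rw [Pi.add_apply, abs_sub_comm z.1 z.2, ← add_mul]

theorem integrable_chordMajorant : Integrable fun x : E4 =>
    ((coreIndicator (x 0) + coreIndicator (x 2)) * kernel 0 2 |x 2 - x 0|) *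
      ((coreIndicator (x 1) + coreIndicator (x 3)) * kernel 0 2 |x 3 - x 1|) := by
  have hkernel : Integrable fun r : ℝ => kernel 0 2 |r| := by
    simpa using integrable_kernel_mul_abs (α := 0) (β := 2) one_pos (by norm_num) (by norm_num)
  have hpair := integrable_add_mul_comp_abs_sub integrable_coreIndicator hkernel
  let e : E4 →ₗ[ℝ] (ℝ × ℝ) × (ℝ × ℝ) :=
    { toFun := fun x => ((x 0, x 2), (x 1, x 3))
      map_add' := fun x y => rfl
      map_smul' := fun r x => rfl }
  have he : Function.Injective e := by
    intro x y hxy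
    obtain ⟨heven, hodd⟩ := Prod.ext_iff.mp hxy
    ext i
    fin_cases i
    exacts [congrArg Prod.fst heven, congrArg Prod.fst hodd, congrArg Prod.snd heven,
      congrArg Prod.snd hodd]
  have hhaar : ((volume.prod volume).prod (volume.prod volume) :
      Measure ((ℝ × ℝ) × (ℝ × ℝ))).IsAddHaarMeasure := Measure.prod.instIsAddHaarMeasure _ _
  exact integrable_comp_injective_linearMap
    (ν := (volume.prod volume).prod (volume.prod volume)) he (by simp) (hpair.mul_prod hpair)

theorem integrable_tripodMajorant {f : ℝ → E3} (hf : Measurable f) {K : NNReal}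
    (hK : 0 < (K : ℝ)) (π : Equiv.Perm (Fin 3)) :
    Integrable fun x : E6 => tripodMajorant f K (ptY x) ((fun k => x (Fin.castAdd 3 k)) ∘ π) := by
  have hkernel : Integrable fun r : ℝ => kernel (3 / 4) (1 / 2) ((2 * K)⁻¹ * |r|) :=
    integrable_kernel_mul_abs (inv_pos.mpr (mul_pos two_pos hK)) (by norm_num) (by norm_num)
  have hkernel3 : Integrable fun p : E3 => kernel (5 / 2) 1 ‖p‖ :=
    integrable_kernel_norm volume (by norm_num) (by norm_num)
  have hpair := integrable_add_mul_comp_abs_sub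
    (k := fun r => kernel (3 / 4) (1 / 2) ((2 * K)⁻¹ * r)) integrable_coreIndicator hkernel
  have htriple := integrable_mul_comp_sub hpair hkernel measurable_fst
  have hquad := integrable_mul_comp_sub htriple hkernel3
    (hf.comp (measurable_fst.comp measurable_fst))
  let e : E6 →ₗ[ℝ] ((ℝ × ℝ) × ℝ) × E3 :=
    { toFun := fun x => (((x (Fin.castAdd 3 (π 0)), x (Fin.castAdd 3 (π 1))),
        x (Fin.castAdd 3 (π 2))), ptYL x)
      map_add' := fun x y => by rw [map_add]; rfl
      map_smul' := fun r x => by rw [map_smul]; rfl }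
  have he : Function.Injective e := by
    intro x y hxy
    obtain ⟨hknot, hpt⟩ := Prod.ext_iff.mp hxy
    have hleft (k : Fin 3) : x (Fin.castAdd 3 (π k)) = y (Fin.castAdd 3 (π k)) := by
      fin_cases k
      exacts [congrArg (fun q => q.1.1) hknot, congrArg (fun q => q.1.2) hknot,
        congrArg (fun q => q.2) hknot]
    ext i
    refine Fin.addCases (m := 3) (n := 3) (fun k => ?_) (fun l => ?_) i
    · simpa using hleft (π.symm k)
    · have hl := congrArg (fun p : E3 => p l) hpt
      fin_cases l
      exacts [hl, hl, hl]
  have hhaar3 : ((volume.prod volume).prod volume : Measure ((ℝ × ℝ) × ℝ)).IsAddHaarMeasure :=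
    Measure.prod.instIsAddHaarMeasure _ _
  have hhaar : (((volume.prod volume).prod volume).prod volume :
      Measure (((ℝ × ℝ) × ℝ) × E3)).IsAddHaarMeasure := Measure.prod.instIsAddHaarMeasure _ _
  exact integrable_comp_injective_linearMap
    (ν := ((volume.prod volume).prod volume).prod volume) he (by simp) hquad

end Integrability

section Convergence

theorem measurableSet_CX : MeasurableSet CX := by
  have hcoord (k : Fin 4) : Measurable fun x : E4 => x k := by fun_prop
  exact (measurableSet_lt (hcoord 0) (hcoord 1)).inter
    ((measurableSet_lt (hcoord 1) (hcoord 2)).inter (measurableSet_lt (hcoord 2) (hcoord 3)))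

theorem measurableSet_CY {f : ℝ → E3} (hf : Measurable f) : MeasurableSet (CY f) := by
  have hcoord (k : Fin 6) : Measurable fun x : E6 => x k := by fun_prop
  have hptY : Measurable ptY := ptYL.continuous.measurable
  have hne (k : Fin 6) : MeasurableSet {x : E6 | ptY x ≠ f (x k)} :=
    (measurableSet_eq_fun hptY (hf.comp (hcoord k))).compl
  exact (measurableSet_lt (hcoord 0) (hcoord 1)).inter
    ((measurableSet_lt (hcoord 1) (hcoord 2)).inter ((hne 0).inter ((hne 1).inter (hne 2))))

namespace IsC11LongKnot

variable {f : ℝ → E3} {L K : NNReal} {g : E3 → ℝ} {G : ℝ}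

theorem integrableOn_omegaX (hf : IsC11LongKnot f L K) (hg : Measurable g)
    (hG : ∀ v, ‖v‖ = 1 → |g v| ≤ G) : IntegrableOn (omegaX f g) CX := by
  have hinj := hf.antilipschitz.injective
  have hmeas : Measurable f := hf.differentiable.continuous.measurable
  refine Integrable.mono' ((integrable_chordMajorant.const_mul
    (G * G * (4 * (K * L : ℝ) ^ 3) ^ 2)).integrableOn)
    (measurable_omegaX hmeas hg).aestronglyMeasurable ?_
  filter_upwards [ae_restrict_mem measurableSet_CX] with x hx
  obtain ⟨h01, h12, h23⟩ := hx
  have h02 : x 0 ≠ x 2 := (h01.trans h12).ne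
  have h13 : x 1 ≠ x 3 := (h12.trans h23).ne
  have hG02 := hG _ (norm_unitv (sub_ne_zero.mpr (hinj.ne h02.symm)))
  have hG13 := hG _ (norm_unitv (sub_ne_zero.mpr (hinj.ne h13)))
  have hG0 : 0 ≤ G := (abs_nonneg _).trans hG02
  rw [Real.norm_eq_abs, abs_omegaX hf.differentiable g (hinj.ne h02.symm) (hinj.ne h13)]
  calc _ ≤ G * G * ((4 * (K * L) ^ 3 *
          ((coreIndicator (x 0) + coreIndicator (x 2)) * kernel 0 2 |x 2 - x 0|)) *
        (4 * (K * L) ^ 3 *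
          ((coreIndicator (x 1) + coreIndicator (x 3)) * kernel 0 2 |x 3 - x 1|))) :=
        mul_le_mul (mul_le_mul hG02 hG13 (abs_nonneg _) hG0)
          (mul_le_mul (hf.chordDensity_le h02) (hf.chordDensity_le h13)
            (chordDensity_nonneg _ _ _)
            ((chordDensity_nonneg _ _ _).trans (hf.chordDensity_le h02)))
          (mul_nonneg (chordDensity_nonneg _ _ _) (chordDensity_nonneg _ _ _))
          (mul_nonneg hG0 hG0)
    _ = _ := by ring

theorem integrableOn_omegaY (hf : IsC11LongKnot f L K) (hg : Measurable g)
    (hG : ∀ v, ‖v‖ = 1 → |g v| ≤ G) : IntegrableOn (omegaY f g) (CY f) := by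
  have hmeas : Measurable f := hf.differentiable.continuous.measurable
  have hmajorant := integrable_finsetSum Finset.univ fun π _ =>
    integrable_tripodMajorant hmeas hf.antilipschitz_const_pos π
  refine Integrable.mono' ((hmajorant.const_mul
    (G ^ 3 * (L * (2 * L + 2 * K * L + 4 * K ^ 2 * L ^ 2) ^ 2))).integrableOn)
    (measurable_omegaY hmeas hg).aestronglyMeasurable ?_
  filter_upwards [ae_restrict_mem (measurableSet_CY hmeas)] with x hx
  obtain ⟨h01, h12, hp0, hp1, hp2⟩ := hx
  have hp (k : Fin 3) : ptY x ≠ f (x (Fin.castAdd 3 k)) := by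
    fin_cases k
    exacts [hp0, hp1, hp2]
  have hmono : StrictMono fun k : Fin 3 => x (Fin.castAdd 3 k) := by
    refine Fin.strictMono_iff_lt_succ.mpr fun k => ?_
    fin_cases k
    exacts [h01, h12]
  have hG0 := hG _ (norm_unitv (sub_ne_zero.mpr hp0))
  have hG1 := hG _ (norm_unitv (sub_ne_zero.mpr hp1.symm))
  have hG2 := hG _ (norm_unitv (sub_ne_zero.mpr hp2))
  have hG_nonneg : 0 ≤ G := (abs_nonneg _).trans hG0
  rw [Real.norm_eq_abs, abs_omegaY hf.differentiable g hp, mul_assoc (G ^ 3)]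
  refine mul_le_mul ?_ (hf.tripodDensity_le hp hmono.injective) (tripodDensity_nonneg _ _ _)
    (by positivity)
  calc _ ≤ G * G * G := by gcongr
    _ = G ^ 3 := by ring

end IsC11LongKnot

theorem statement4_general {f : ℝ → E3} (hf : ContDiff ℝ 2 f) (hinj : Function.Injective f)
    (himm : ∀ t, deriv f t ≠ 0) (hline : ∀ t, 1 ≤ |t| → f t = mk3 t 0 0) {g : E3 → ℝ}
    (hg : Continuous g) :
    IntegrableOn (omegaX f g) CX ∧ IntegrableOn (omegaY f g) (CY f) := by
  obtain ⟨L, K, hknot⟩ := exists_isC11LongKnot hf hinj himm hline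
  obtain ⟨G, hG⟩ := (isCompact_sphere (0 : E3) 1).exists_bound_of_continuousOn hg.continuousOn
  have hbound (v : E3) (hv : ‖v‖ = 1) : |g v| ≤ G := hG v (mem_sphere_zero_iff_norm.mpr hv)
  exact ⟨hknot.integrableOn_omegaX hg.measurable hbound,
    hknot.integrableOn_omegaY hg.measurable hbound⟩

end Convergence

/-- convergence of the configuration space integrals for long knots.
For every long knot `f`, every `ε > 0` and every 2-form `η` as specified, the
configuration space integrals `I_X(f)` and `I_Y(f)` converge absolutely. -/
theorem statement4 (f : ℝ → E3) (hf : IsLongKnot f) (ε : ℝ) (hε : 0 < ε)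
    (g : E3 → ℝ) (hg : IsEtaForm ε g) :
    IntegrableOn (omegaX f g) CX volume ∧ IntegrableOn (omegaY f g) (CY f) volume :=
  statement4_general (contDiff_infty.mp hf.1 2) hf.2.1 hf.2.2.1 hf.2.2.2 hg.1.continuous

end
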